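/- arXiv:0712.2337 — 5 statements merged into one kernel-verified Lean document; each statement's English description precedes it below -/
import Mathlib

section
/- For any non-empty word ω = (ω₁,…,ω_r) with letters in 𝒩, if β_ω ≠ 0 then ‖ω‖ ≥ −1, the partial sums satisfy ω₁+…+ω_i ≥ 0 for every 1 ≤ i ≤ r−1, and the tail sums satisfy ω_i+…+ω_r ≤ ‖ω‖ for every 1 ≤ i ≤ r. -/
/-!
Statement 2.  Let `𝒩 = {n ∈ ℤ : n ≥ −1}`.  For a non-empty word `ω = (ω₁,…,ω_r)` of
elements of `𝒩` set `‖ω‖ = ω₁+…+ω_r` and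
`β_ω = 1` if `r = 1`, `β_ω = (ω₁+1)(ω₁+ω₂+1)⋯(ω₁+…+ω_{r−1}+1)` if `r ≥ 2`.
If `β_ω ≠ 0` then `‖ω‖ ≥ −1`, all partial sums `ω₁+…+ω_i` (`1 ≤ i ≤ r−1`) are `≥ 0`,
and all tail sums `ω_i+…+ω_r` (`1 ≤ i ≤ r`) are `≤ ‖ω‖`.
-/

/-- `β_ω = ∏_{i=1}^{r-1} (ω₁+…+ω_i + 1)`; the empty product (case `r = 1`) is `1`. -/
def betaCoeff (ω : List ℤ) : ℤ :=
  ∏ i ∈ Finset.range (ω.length - 1), ((ω.take (i + 1)).sum + 1)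

/-!
The partial sums of a word with letters `≥ -1` form a walk that starts at `0` and descends by at
most `1` at each step, so it cannot become negative without visiting `-1`. A factor of `β_ω`
vanishes exactly when a proper non-empty partial sum is `-1`; hence `β_ω ≠ 0` keeps all of these
nonnegative. The last letter can then bring the total down to `-1` at worst, and a tail sum is the
total minus a nonnegative partial sum.
-/

theorem lt_of_le_succ_of_forall_ne {α : Type*} [LinearOrder α] [SuccOrder α] {s : ℕ → α} {a : α}
    {n : ℕ} (hzero : a < s 0) (hstep : ∀ i < n, s i ≤ Order.succ (s (i + 1)))
    (hne : ∀ i < n, s (i + 1) ≠ a) {i : ℕ} (hi : i ≤ n) : a < s i := by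
  induction i with
  | zero => exact hzero
  | succ i ih =>
    have hle : a ≤ s (i + 1) :=
      Order.le_of_lt_succ ((ih (Nat.le_of_succ_le hi)).trans_le (hstep i hi))
    exact hle.lt_of_ne (hne i hi).symm

theorem sum_take_add_le_sum_take_succ {M : Type*} [AddMonoid M] [Preorder M] [AddLeftMono M]
    {l : List M} {c : M} (hc : ∀ x ∈ l, c ≤ x) {i : ℕ} (hi : i < l.length) :
    (l.take i).sum + c ≤ (l.take (i + 1)).sum := by
  rw [List.sum_take_succ l i hi]
  gcongr
  exact hc _ (List.getElem_mem hi)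

theorem sum_drop_le_sum_iff {M : Type*} [AddMonoid M] [LE M] [AddRightMono M] [AddRightReflectLE M]
    (l : List M) (i : ℕ) : (l.drop i).sum ≤ l.sum ↔ 0 ≤ (l.take i).sum := by
  rw [← List.sum_take_add_sum_drop l i, le_add_iff_nonneg_left]

theorem betaCoeff_ne_zero_iff {ω : List ℤ} :
    betaCoeff ω ≠ 0 ↔ ∀ i < ω.length - 1, (ω.take (i + 1)).sum ≠ -1 := by
  simp only [betaCoeff, Finset.prod_ne_zero_iff, Finset.mem_range, ne_eq, add_eq_zero_iff_eq_neg]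

theorem sum_take_nonneg_of_betaCoeff_ne_zero {ω : List ℤ} (hω : ∀ x ∈ ω, -1 ≤ x)
    (hβ : betaCoeff ω ≠ 0) {i : ℕ} (hi : i ≤ ω.length - 1) : 0 ≤ (ω.take i).sum := by
  have hstep : ∀ j < ω.length - 1, (ω.take j).sum ≤ Order.succ (ω.take (j + 1)).sum := by
    intro j hj
    rw [Order.succ_eq_add_one, ← sub_le_iff_le_add]
    exact sum_take_add_le_sum_take_succ hω (by lia)
  have hlt : -1 < (ω.take i).sum :=
    lt_of_le_succ_of_forall_ne (s := fun j ↦ (ω.take j).sum) (by simp) hstep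
      (betaCoeff_ne_zero_iff.mp hβ) hi
  lia

theorem neg_one_le_sum_of_betaCoeff_ne_zero {ω : List ℤ} (hω : ∀ x ∈ ω, -1 ≤ x)
    (hβ : betaCoeff ω ≠ 0) : -1 ≤ ω.sum := by
  obtain rfl | hne := eq_or_ne ω []
  · simp
  have hpos : 0 < ω.length := List.length_pos_iff.mpr hne
  calc
    -1 ≤ (ω.take (ω.length - 1)).sum + -1 :=
      le_add_of_nonneg_left (sum_take_nonneg_of_betaCoeff_ne_zero hω hβ le_rfl)
    _ ≤ (ω.take (ω.length - 1 + 1)).sum :=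
      sum_take_add_le_sum_take_succ hω (Nat.sub_one_lt_of_lt hpos)
    _ = ω.sum := by rw [Nat.sub_add_cancel hpos, List.take_length]

theorem stmt_2 (ω : List ℤ) (hne : ω ≠ []) (hΩ : ∀ x ∈ ω, (-1 : ℤ) ≤ x)
    (hβ : betaCoeff ω ≠ 0) :
    (-1 : ℤ) ≤ ω.sum ∧
    (∀ i : ℕ, 1 ≤ i → i ≤ ω.length - 1 → (0 : ℤ) ≤ (ω.take i).sum) ∧
    (∀ i : ℕ, 1 ≤ i → i ≤ ω.length → (ω.drop (i - 1)).sum ≤ ω.sum) := by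
  refine ⟨neg_one_le_sum_of_betaCoeff_ne_zero hΩ hβ,
    fun i _ hi ↦ sum_take_nonneg_of_betaCoeff_ne_zero hΩ hβ hi, fun i _ hi ↦ ?_⟩
  exact (sum_drop_le_sum_iff ω (i - 1)).mpr
    (sum_take_nonneg_of_betaCoeff_ne_zero hΩ hβ (Nat.sub_le_sub_right hi 1))
end

section
/- The map τ from moulds to dimoulds, defined by τ(M)^{(α,β)} = Σ_ω sh(α,β;ω) M^ω, is an A-algebra homomorphism: it is A-linear, τ(1^•) = 1^{••}, and τ(M × N) = τ(M) × τ(N) for all moulds M, N. -/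
/-! Statement 6: the map τ from moulds to dimoulds is an A-algebra homomorphism. -/

open scoped Classical

/-- Shuffle coefficient `sh(α, β; ω)`: the number of ways of obtaining `ω` by
interdigitating the letters of `α` and those of `β` while preserving their internal order. -/
noncomputable def sh {Ω : Type*} : List Ω → List Ω → List Ω → ℕ
  | [], [], [] => 1
  | _ :: _, _, [] => 0
  | [], _ :: _, [] => 0
  | [], [], _ :: _ => 0
  | [], b :: β, c :: ω => if b = c then sh [] β ω else 0
  | a :: α, [], c :: ω => if a = c then sh α [] ω else 0
  | a :: α, b :: β, c :: ω =>
      (if a = c then sh α (b :: β) ω else 0) +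
      (if b = c then sh (a :: α) β ω else 0)

/-- Mould multiplication `(M × N)^ω = Σ_{ω = ω¹·ω²} M^{ω¹} N^{ω²}`. -/
noncomputable def mmul {Ω A : Type*} [CommRing A] (M N : List Ω → A) : List Ω → A := fun ω =>
  ∑ i ∈ Finset.range (ω.length + 1), M (ω.take i) * N (ω.drop i)

/-- The unit mould `1^•`. -/
def munit {Ω A : Type*} [CommRing A] : List Ω → A := fun ω => match ω with | [] => 1 | _ => 0

/-- `Σ_ω sh(α,β;ω) M^ω`, realized as a finite sum over the permutations of `α ++ β`
(the shuffle coefficient vanishes on any word which is not a permutation of `α ++ β`). -/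
noncomputable def shSum {Ω A : Type*} [CommRing A] (M : List Ω → A) (α β : List Ω) : A :=
  ∑ ω ∈ (α ++ β).permutations.toFinset, sh α β ω • M ω

/-- A mould is alternal if `M^∅ = 0` and all the shuffle sums vanish. -/
def IsAlternal {Ω A : Type*} [CommRing A] (M : List Ω → A) : Prop :=
  M [] = 0 ∧ ∀ α β : List Ω, α ≠ [] → β ≠ [] → shSum M α β = 0

/-- A mould is symmetral if `M^∅ = 1` and the shuffle sums reproduce the products. -/
def IsSymmetral {Ω A : Type*} [CommRing A] (M : List Ω → A) : Prop :=
  M [] = 1 ∧ ∀ α β : List Ω, α ≠ [] → β ≠ [] → shSum M α β = M α * M β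

/-- Dimould multiplication. -/
noncomputable def dmul {Ω A : Type*} [CommRing A] (M N : List Ω → List Ω → A) :
    List Ω → List Ω → A := fun ω η =>
  ∑ i ∈ Finset.range (ω.length + 1), ∑ j ∈ Finset.range (η.length + 1),
    M (ω.take i) (η.take j) * N (ω.drop i) (η.drop j)

/-- The unit dimould `1^{••}`. -/
def dunit {Ω A : Type*} [CommRing A] : List Ω → List Ω → A := fun ω η =>
  match ω, η with | [], [] => 1 | _, _ => 0

/-- The map `τ` from moulds to dimoulds, `τ(M)^{(α,β)} = Σ_ω sh(α,β;ω) M^ω`. -/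
noncomputable def tau {Ω A : Type*} [CommRing A] (M : List Ω → A) : List Ω → List Ω → A :=
  fun α β => shSum M α β

/-!
A shuffle of two non-empty words starts with the first letter of one of them, so `τ(M)` is
determined recursively by the moulds `ω ↦ M^{a·ω}`. The product of moulds obeys a twisted Leibniz
rule for these first-letter derivatives, and multiplication by `τ(M)` on the left obeys the
corresponding rule for dimoulds, because the recursion applies to each pair of prefixes.
Multiplicativity of `τ` follows by induction on the total length of the two words.
-/

section

variable {Ω A : Type*}

/-- The list of shuffles of two words, repeated with multiplicity: a word `ω` occurs
`sh α β ω` times. -/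
def shuffles : List Ω → List Ω → List (List Ω)
  | [], β => [β]
  | a :: α, [] => [a :: α]
  | a :: α, b :: β =>
      (shuffles α (b :: β)).map (List.cons a) ++ (shuffles (a :: α) β).map (List.cons b)

/-- The derivative `ω ↦ M^{a·ω}` of a mould with respect to a first letter `a`, the analogue for
moulds of the left quotient of a formal language. -/
def letterDeriv (a : Ω) (M : List Ω → A) : List Ω → A :=
  M ∘ List.cons a

theorem shuffles_nil_right (α : List Ω) : shuffles α [] = [α] := by
  cases α <;> rw [shuffles]

theorem perm_append_of_mem_shuffles {α β ω : List Ω} (hω : ω ∈ shuffles α β) :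
    ω.Perm (α ++ β) := by
  induction α, β using shuffles.induct generalizing ω with
  | case1 β => simp_all [shuffles]
  | case2 a α => simp_all [shuffles]
  | case3 a α b β ihα ihβ =>
    simp only [shuffles, List.mem_append, List.mem_map] at hω
    rcases hω with ⟨η, hη, rfl⟩ | ⟨η, hη, rfl⟩
    · exact (ihα hη).cons a
    · exact ((ihβ hη).cons b).trans List.perm_middle.symm

theorem count_nil_map_cons (a : Ω) (L : List (List Ω)) :
    (L.map (List.cons a)).count [] = 0 :=
  List.count_eq_zero.2 (by simp)

theorem count_cons_map_cons (a c : Ω) (ω : List Ω) (L : List (List Ω)) :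
    (L.map (List.cons a)).count (c :: ω) = if a = c then L.count ω else 0 := by
  split_ifs with hac
  · subst hac
    exact List.count_map_of_injective L _ List.cons_injective ω
  · exact List.count_eq_zero.2 (by simp [hac])

theorem count_shuffles (α β ω : List Ω) : (shuffles α β).count ω = sh α β ω := by
  induction α, β, ω using sh.induct with
  | case2 a α β => cases β <;> simp [sh, shuffles, count_nil_map_cons]
  | _ => simp_all [sh, shuffles, shuffles_nil_right, count_cons_map_cons, List.count_singleton]

variable [CommRing A]

theorem tau_eq_sum_shuffles (M : List Ω → A) (α β : List Ω) :
    tau M α β = ((shuffles α β).map M).sum := by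
  have shuffles_subset : (shuffles α β).toFinset ⊆ (α ++ β).permutations.toFinset := fun ω hω =>
    List.mem_toFinset.2 <| List.mem_permutations.2 <|
      perm_append_of_mem_shuffles (List.mem_toFinset.1 hω)
  calc tau M α β
      = ∑ ω ∈ (α ++ β).permutations.toFinset, (shuffles α β).count ω • M ω := by
        simp only [tau, shSum, count_shuffles]
    _ = ∑ ω ∈ (shuffles α β).toFinset, (shuffles α β).count ω • M ω := by
        refine (Finset.sum_subset shuffles_subset fun ω _ hω => ?_).symm
        rw [List.count_eq_zero.2 (mt List.mem_toFinset.2 hω), zero_smul]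
    _ = ((shuffles α β).map M).sum := by
        convert! (Finset.sum_list_map_count (shuffles α β) M).symm

theorem tau_add (M N : List Ω → A) : tau (M + N) = tau M + tau N := by
  funext α β
  simp [tau, shSum, Finset.sum_add_distrib]

theorem tau_smul (c : A) (M : List Ω → A) : tau (c • M) = c • tau M := by
  funext α β
  simp [tau, shSum, Finset.mul_sum, mul_left_comm]

theorem tau_nil_left (M : List Ω → A) (β : List Ω) : tau M [] β = M β := by
  simp [tau_eq_sum_shuffles, shuffles]

theorem tau_nil_right (M : List Ω → A) (α : List Ω) : tau M α [] = M α := by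
  simp [tau_eq_sum_shuffles, shuffles_nil_right]

theorem tau_cons_cons (M : List Ω → A) (a b : Ω) (α β : List Ω) :
    tau M (a :: α) (b :: β) =
      tau (letterDeriv a M) α (b :: β) + tau (letterDeriv b M) (a :: α) β := by
  simp [tau_eq_sum_shuffles, shuffles, letterDeriv]

theorem letterDeriv_munit (a : Ω) : letterDeriv a (munit : List Ω → A) = 0 := rfl

theorem letterDeriv_mmul (a : Ω) (M N : List Ω → A) :
    letterDeriv a (mmul M N) = mmul (letterDeriv a M) N + M [] • letterDeriv a N := by
  funext ω
  simp [letterDeriv, mmul, Finset.sum_range_succ' _ (ω.length + 1)]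

theorem tau_munit : tau (munit : List Ω → A) = dunit := by
  have tau_zero : tau (0 : List Ω → A) = 0 := by simpa using tau_smul 0 (0 : List Ω → A)
  funext α β
  match α, β with
  | [], [] => exact tau_nil_left _ _
  | [], _ :: _ => exact tau_nil_left _ _
  | _ :: _, [] => exact tau_nil_right _ _
  | _ :: _, _ :: _ => simp [tau_cons_cons, letterDeriv_munit, tau_zero, dunit]

theorem dmul_tau_cons_cons (M : List Ω → A) (Q : List Ω → List Ω → A) (a b : Ω) (α β : List Ω) :
    dmul (tau M) Q (a :: α) (b :: β) =
      dmul (tau (letterDeriv a M)) Q α (b :: β) + dmul (tau (letterDeriv b M)) Q (a :: α) β +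
        M [] * Q (a :: α) (b :: β) := by
  -- `tau_cons_cons` applies only to pairs of non-empty prefixes, so the empty ones are split off.
  simp only [dmul, List.length_cons, Finset.sum_range_succ' _ (α.length + 1),
    Finset.sum_range_succ' _ (β.length + 1), List.take_succ_cons, List.drop_succ_cons,
    List.take_zero, List.drop_zero, tau_nil_left, tau_nil_right, tau_cons_cons M, letterDeriv,
    Function.comp_apply, add_mul, Finset.sum_add_distrib]
  ring

theorem tau_mmul (M N : List Ω → A) : tau (mmul M N) = dmul (tau M) (tau N) := by
  funext α β
  induction α, β using shuffles.induct generalizing M with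
  | case1 β => simp [tau_nil_left, mmul, dmul]
  | case2 a α => simp [tau_nil_right, mmul, dmul]
  | case3 a α b β ihα ihβ =>
    calc tau (mmul M N) (a :: α) (b :: β)
        = (tau (mmul (letterDeriv a M) N) α (b :: β) +
              M [] * tau (letterDeriv a N) α (b :: β)) +
            (tau (mmul (letterDeriv b M) N) (a :: α) β +
              M [] * tau (letterDeriv b N) (a :: α) β) := by
          simp only [tau_cons_cons, letterDeriv_mmul, tau_add, tau_smul, Pi.add_apply,
            Pi.smul_apply, smul_eq_mul]
      _ = dmul (tau (letterDeriv a M)) (tau N) α (b :: β) +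
            dmul (tau (letterDeriv b M)) (tau N) (a :: α) β +
            M [] * tau N (a :: α) (b :: β) := by
          rw [ihα, ihβ, tau_cons_cons N]
          ring
      _ = dmul (tau M) (tau N) (a :: α) (b :: β) := (dmul_tau_cons_cons M (tau N) a b α β).symm

end

theorem stmt_6_general {Ω A : Type*} [CommRing A] :
    (∀ M N : List Ω → A, tau (M + N) = tau M + tau N) ∧
    (∀ (c : A) (M : List Ω → A), tau (c • M) = c • tau M) ∧
    tau (munit : List Ω → A) = dunit ∧
    (∀ M N : List Ω → A, tau (mmul M N) = dmul (tau M) (tau N)) :=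
  ⟨tau_add, tau_smul, tau_munit, tau_mmul⟩

theorem stmt_6 {Ω A : Type*} [Nonempty Ω] [CommRing A] [Algebra ℂ A] :
    (∀ M N : List Ω → A, tau (M + N) = tau M + tau N) ∧
    (∀ (c : A) (M : List Ω → A), tau (c • M) = c • tau M) ∧
    tau (munit : List Ω → A) = dunit ∧
    (∀ M N : List Ω → A, tau (mmul M N) = dmul (tau M) (tau N)) :=
  stmt_6_general
end

section
/- Suppose Ω is a commutative semigroup and U is an alternal mould. Then: (i) if M is alternal, M ∘ U is alternal; (ii) if M is symmetral, M ∘ U is symmetral; (iii) if moreover U^ω is invertible in A for every word ω of length 1 (so that U admits an inverse V for mould composition, V ∘ U = U ∘ V = I^•), then this composition inverse V is alternal, where I^• is the identity mould taking the value 1 on words of length 1 and 0 on all other words. -/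
/-! Statement 11: composition with an alternal mould preserves alternality and symmetrality, and the composition inverse of an alternal mould is alternal. -/

open scoped Classical

/-- The sum `‖ω‖` of a non-empty word, in the commutative semigroup `Ω`
(junk value on the empty word). -/
noncomputable def wsum {Ω : Type*} [AddCommSemigroup Ω] [Nonempty Ω] : List Ω → Ω
  | [] => Classical.arbitrary Ω
  | a :: l => l.foldl (· + ·) a

/-- Mould composition: `(M ∘ U)^ω = Σ M^{(‖ω¹‖,…,‖ω^s‖)} U^{ω¹}⋯U^{ω^s}`, the sum being
over all decompositions of `ω` into consecutive non-empty blocks `ω = ω¹·…·ω^s`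
(equivalently, over all compositions of `r(ω)`); for `ω = ∅` this gives `M^∅`. -/
noncomputable def mcomp {Ω A : Type*} [AddCommSemigroup Ω] [Nonempty Ω] [CommRing A]
    (M U : List Ω → A) : List Ω → A := fun ω =>
  ∑ c : Composition ω.length,
    M ((ω.splitWrtComposition c).map wsum) * ((ω.splitWrtComposition c).map U).prod

/-- The identity mould `I^•`. -/
def idMould {Ω A : Type*} [CommRing A] : List Ω → A := fun ω =>
  match ω with | [_] => 1 | _ => 0

/-!
The words on `Ω` span the shuffle algebra, and a mould is a linear form on it: alternal moulds are
the infinitesimal characters, symmetral moulds the characters. Composition with `U` is dual to the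
endomorphism `subst U` sending `ω` to `∑ U^{ω¹} ⋯ U^{ω^s} (‖ω¹‖, …, ‖ω^s‖)`. If `U` is alternal,
then `subst U` is multiplicative: the words from which the first block of a shuffle of `α` and `β`
is interleaved cancel, unless that block comes entirely from `α` or entirely from `β`, and this is
the recursion that defines the shuffle of `subst U α` and `subst U β`. Pulling back a character, or
an infinitesimal one, gives a form of the same kind.

If `U` is invertible on letters, `subst U` is triangular for the length of words with an invertible
diagonal, hence an automorphism. The pullback `V` of the alternal mould `I^•` along its inverse
satisfies `V ∘ U = I^•`, and then `subst V ∘ subst U = subst (V ∘ U) = id` gives `U ∘ V = I^•`.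
-/

namespace Mould

open Finsupp

section Triangular

variable {ι R : Type*} [Ring R]

lemma injective_of_triangular {d : ι → ℕ} {f : (ι →₀ R) →ₗ[R] ι →₀ R}
    (hdiag : ∀ i, IsUnit (f (single i 1) i))
    (htri : ∀ i j, f (single i 1) j ≠ 0 → j = i ∨ d j < d i) : Function.Injective f := by
  refine (injective_iff_map_eq_zero f).2 fun x hx => by_contra fun hne => ?_
  obtain ⟨i, hi, hmax⟩ := x.support.exists_max_image d (support_nonempty_iff.2 hne)
  have hcoeff : f x i = x i * f (single i 1) i := by
    conv_lhs => rw [← x.sum_single, map_finsuppSum, Finsupp.sum, finsetSum_apply]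
    simp only [← smul_single_one _ (x _), map_smul, Finsupp.smul_apply, smul_eq_mul]
    refine Finset.sum_eq_single_of_mem i hi fun j hj hji => ?_
    rw [not_not.1 (mt (htri j i) (not_or.2 ⟨hji.symm, not_lt.2 (hmax j hj)⟩)), mul_zero]
  rw [hx, Finsupp.zero_apply, eq_comm, (hdiag i).mul_left_eq_zero] at hcoeff
  exact mem_support_iff.1 hi hcoeff

lemma surjective_of_triangular {d : ι → ℕ} {f : (ι →₀ R) →ₗ[R] ι →₀ R}
    (hdiag : ∀ i, IsUnit (f (single i 1) i))
    (htri : ∀ i j, f (single i 1) j ≠ 0 → j = i ∨ d j < d i) : Function.Surjective f := by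
  have hsingle (i : ι) : single i 1 ∈ LinearMap.range f := by
    induction hn : d i using Nat.strong_induction_on generalizing i with
    | _ n ih =>
      subst hn
      have hlower : (f (single i 1)).erase i ∈ LinearMap.range f := by
        rw [← ((f (single i 1)).erase i).sum_single]
        refine Submodule.sum_mem _ fun j hj => ?_
        obtain ⟨hji, hj⟩ := Finset.mem_erase.1 (support_erase (f := f (single i 1)) ▸ hj)
        rw [← smul_single_one]
        exact Submodule.smul_mem _ _
          (ih _ ((htri i j (mem_support_iff.1 hj)).resolve_left hji) j rfl)
      have hdiag_mem : single i (f (single i 1) i) ∈ LinearMap.range f := by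
        rw [← add_sub_cancel_right (single i _), single_add_erase]
        exact Submodule.sub_mem _ ⟨_, rfl⟩ hlower
      obtain ⟨u, hu⟩ := hdiag i
      simpa [← hu] using Submodule.smul_mem _ (↑u⁻¹ : R) hdiag_mem
  refine LinearMap.range_eq_top.1 (Submodule.eq_top_iff'.2 fun x => ?_)
  rw [← x.sum_single]
  refine Submodule.sum_mem _ fun i _ => ?_
  rw [← smul_single_one]
  exact Submodule.smul_mem _ _ (hsingle i)

end Triangular

section Deconcatenation

variable {Ω B : Type*} [AddCommMonoid B]

/-- The sum of `F p q` over all decompositions `ω = p ++ q`, the empty ones included: the value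
of `F` on the deconcatenation coproduct of `ω`. -/
def deconcatSum (F : List Ω → List Ω → B) (ω : List Ω) : B :=
  ∑ i ∈ Finset.range (ω.length + 1), F (ω.take i) (ω.drop i)

lemma deconcatSum_nil (F : List Ω → List Ω → B) : deconcatSum F [] = F [] [] := by
  simp [deconcatSum]

lemma deconcatSum_cons (F : List Ω → List Ω → B) (a : Ω) (ω : List Ω) :
    deconcatSum F (a :: ω) = F [] (a :: ω) + deconcatSum (fun p q => F (a :: p) q) ω := by
  rw [deconcatSum, List.length_cons, Finset.sum_range_succ', add_comm]
  rfl

lemma deconcatSum_zero (ω : List Ω) : deconcatSum (fun _ _ => (0 : B)) ω = 0 :=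
  Finset.sum_const_zero

lemma deconcatSum_add (F G : List Ω → List Ω → B) (ω : List Ω) :
    deconcatSum (fun p q => F p q + G p q) ω = deconcatSum F ω + deconcatSum G ω :=
  Finset.sum_add_distrib

lemma map_deconcatSum {C L : Type*} [AddCommMonoid C] [FunLike L B C] [AddMonoidHomClass L B C]
    (f : L) (F : List Ω → List Ω → B) (ω : List Ω) :
    f (deconcatSum F ω) = deconcatSum (fun p q => f (F p q)) ω :=
  map_sum f _ _

lemma deconcatSum_congr {F G : List Ω → List Ω → B} {ω : List Ω}
    (h : ∀ p q, p ++ q = ω → F p q = G p q) : deconcatSum F ω = deconcatSum G ω :=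
  Finset.sum_congr rfl fun _ _ => h _ _ (List.take_append_drop _ _)

lemma deconcatSum_assoc (H : List Ω → List Ω → List Ω → B) (ω : List Ω) :
    deconcatSum (fun r s => deconcatSum (fun p q => H p q s) r) ω =
      deconcatSum (fun p t => deconcatSum (H p) t) ω := by
  induction ω generalizing H with
  | nil => simp only [deconcatSum_nil]
  | cons a ω ih => simp only [deconcatSum_cons, deconcatSum_nil, deconcatSum_add, ih, add_assoc]

@[elab_as_elim]
lemma suffix_induction {P : List Ω → Prop}
    (step : ∀ ω, (∀ p q, p ≠ [] → p ++ q = ω → P q) → P ω) (ω : List Ω) : P ω := by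
  induction hn : ω.length using Nat.strong_induction_on generalizing ω with
  | _ n ih =>
    refine step ω fun p q hp hpq => ih _ ?_ q rfl
    have hlen := List.length_pos_iff.2 hp
    rw [← hn, ← hpq, List.length_append]
    omega

lemma smul_deconcatSum {R : Type*} [Semiring R] [Module R B] (c : R) (F : List Ω → List Ω → B)
    (ω : List Ω) : c • deconcatSum F ω = deconcatSum (fun p q => c • F p q) ω :=
  Finset.smul_sum

variable {A : Type*} [CommRing A] [Module A B]

lemma munit_of_ne_nil {ω : List Ω} (hω : ω ≠ []) : (munit ω : A) = 0 := by
  cases ω with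
  | nil => contradiction
  | cons => rfl

@[simp] lemma munit_nil : (munit ([] : List Ω) : A) = 1 := rfl

@[simp] lemma munit_cons (a : Ω) (ω : List Ω) : (munit (a :: ω) : A) = 0 := rfl

lemma deconcatSum_munit_smul (F : List Ω → List Ω → B) (ω : List Ω) :
    deconcatSum (fun p q => (munit p : A) • F p q) ω = F [] ω := by
  cases ω with
  | nil => simp [deconcatSum_nil]
  | cons a ω => simp [deconcatSum_cons, deconcatSum_zero]

lemma deconcatSum_mul_munit (M : List Ω → A) (ω : List Ω) :
    deconcatSum (fun p q => M p * munit q) ω = M ω := by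
  induction ω generalizing M with
  | nil => simp [deconcatSum_nil]
  | cons a ω ih => simp [deconcatSum_cons, ih]

lemma deconcatSum_idMould_smul_cons (F : List Ω → List Ω → B) (a : Ω) (ω : List Ω) :
    deconcatSum (fun p q => (idMould p : A) • F p q) (a :: ω) = F [a] ω := by
  have hcons (p : List Ω) : (idMould (a :: p) : A) = munit p := by cases p <;> rfl
  simp only [deconcatSum_cons, hcons, deconcatSum_munit_smul]
  simp [idMould]

end Deconcatenation

section Shuffle

variable {Ω A : Type*} [CommSemiring A]

lemma linearCombination_congr {ι B : Type*} [AddCommMonoid B] [Module A B] {f g : ι → B}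
    {x : ι →₀ A} (h : ∀ w, x w ≠ 0 → f w = g w) :
    linearCombination A f x = linearCombination A g x :=
  Finsupp.sum_congr fun w hw => congrArg (x w • ·) (h w (mem_support_iff.1 hw))

/-- Left concatenation with a letter, extended linearly from words. -/
noncomputable def prepend (a : Ω) : (List Ω →₀ A) →ₗ[A] (List Ω →₀ A) :=
  lmapDomain A A (List.cons a)

@[simp] lemma prepend_single (a : Ω) (ω : List Ω) (c : A) :
    prepend a (single ω c) = single (a :: ω) c :=
  mapDomain_single

lemma prepend_apply_nil (a : Ω) (x : List Ω →₀ A) : prepend a x [] = 0 :=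
  mapDomain_of_notMem_range _ _ (by simp)

lemma prepend_apply_cons (a c : Ω) (x : List Ω →₀ A) (ω : List Ω) :
    prepend a x (c :: ω) = if a = c then x ω else 0 := by
  split_ifs with h
  · subst h
    exact mapDomain_apply List.cons_injective _ _
  · exact mapDomain_of_notMem_range _ _ (by simp [h])

lemma linearCombination_prepend {B : Type*} [AddCommMonoid B] [Module A B] (f : List Ω → B)
    (a : Ω) (x : List Ω →₀ A) :
    linearCombination A f (prepend a x) = linearCombination A (fun w => f (a :: w)) x :=
  linearCombination_mapDomain _ _ _

/-- The shuffle product of two words, as a formal linear combination of words. -/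
noncomputable def shuffleWord : List Ω → List Ω → (List Ω →₀ A)
  | [], β => single β 1
  | a :: α, [] => single (a :: α) 1
  | a :: α, b :: β => prepend a (shuffleWord α (b :: β)) + prepend b (shuffleWord (a :: α) β)

lemma shuffleWord_nil_right (α : List Ω) : shuffleWord α [] = single α (1 : A) := by
  cases α <;> simp [shuffleWord]

lemma sh_nil_left (β ω : List Ω) : sh [] β ω = if β = ω then 1 else 0 := by
  induction β generalizing ω <;> cases ω <;> simp_all [sh, ite_and]

lemma sh_nil_right (α ω : List Ω) : sh α [] ω = if α = ω then 1 else 0 := by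
  induction α generalizing ω <;> cases ω <;> simp_all [sh, ite_and]

lemma shuffleWord_apply (α β ω : List Ω) : shuffleWord α β ω = (sh α β ω : A) := by
  induction α, β using shuffleWord.induct generalizing ω with
  | case1 β => simp [shuffleWord, sh_nil_left, single_apply]
  | case2 a α => simp [shuffleWord, sh_nil_right, single_apply]
  | case3 a α b β ihα ihβ =>
    cases ω <;> simp [shuffleWord, sh, prepend_apply_nil, prepend_apply_cons, ihα, ihβ]

lemma perm_append_of_sh_ne_zero {α β ω : List Ω} (h : sh α β ω ≠ 0) : ω.Perm (α ++ β) := by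
  induction α, β, ω using sh.induct with
  | case9 a α b β c ω ihα ihβ =>
    rw [sh, ne_eq, Nat.add_eq_zero_iff, not_and_or] at h
    rcases h with h | h <;> rw [ite_eq_right_iff, not_forall] at h <;> obtain ⟨rfl, h⟩ := h
    · exact (ihα h).cons a
    · exact ((ihβ h).cons b).trans List.perm_middle.symm
  | _ => simp_all [sh]

lemma perm_append_of_shuffleWord_ne_zero {α β ω : List Ω} (h : shuffleWord α β ω ≠ (0 : A)) :
    ω.Perm (α ++ β) := by
  rw [shuffleWord_apply] at h
  exact perm_append_of_sh_ne_zero fun hsh => h (by rw [hsh, Nat.cast_zero])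

/-- The shuffle product, extended bilinearly from words. -/
noncomputable def shuffle : (List Ω →₀ A) →ₗ[A] (List Ω →₀ A) →ₗ[A] (List Ω →₀ A) :=
  linearCombination A fun α => linearCombination A (shuffleWord α)

@[simp] lemma shuffle_single_single (α β : List Ω) (c d : A) :
    shuffle (single α c) (single β d) = (c * d) • shuffleWord α β := by
  simp [shuffle, smul_smul]

lemma shuffle_single_nil_left (x : List Ω →₀ A) : shuffle (single [] 1) x = x := by
  induction x using Finsupp.induction_linear with
  | zero => simp
  | add x y hx hy => simp only [map_add, hx, hy]
  | single ω c => simp [shuffleWord]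

lemma shuffle_single_nil_right (x : List Ω →₀ A) : shuffle x (single [] 1) = x := by
  induction x using Finsupp.induction_linear with
  | zero => simp
  | add x y hx hy => simp only [map_add, LinearMap.add_apply, hx, hy]
  | single ω c => simp [shuffleWord_nil_right]

lemma shuffle_prepend_prepend (a b : Ω) (x y : List Ω →₀ A) :
    shuffle (prepend a x) (prepend b y) =
      prepend a (shuffle x (prepend b y)) + prepend b (shuffle (prepend a x) y) := by
  induction x using Finsupp.induction_linear with
  | zero => simp
  | add x₁ x₂ h₁ h₂ => simp only [map_add, LinearMap.add_apply, h₁, h₂]; abel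
  | single α c =>
    induction y using Finsupp.induction_linear with
    | zero => simp
    | add y₁ y₂ h₁ h₂ => simp only [map_add, h₁, h₂]; abel
    | single β d => simp [shuffleWord]

lemma shuffle_deconcatSum_prepend (f : List Ω → Ω) (x y : List Ω → List Ω → List Ω →₀ A)
    (α β : List Ω) :
    shuffle (deconcatSum (fun p q => prepend (f p) (x p q)) α)
        (deconcatSum (fun p q => prepend (f p) (y p q)) β) =
      deconcatSum (fun p q => prepend (f p)
          (shuffle (x p q) (deconcatSum (fun p q => prepend (f p) (y p q)) β))) α +
        deconcatSum (fun p q => prepend (f p)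
          (shuffle (deconcatSum (fun p q => prepend (f p) (x p q)) α) (y p q))) β := by
  simp only [deconcatSum, map_sum, LinearMap.sum_apply, shuffle_prepend_prepend,
    Finset.sum_add_distrib]
  rw [Finset.sum_comm (s := Finset.range (β.length + 1))]

lemma linearCombination_deconcatSum_prepend {B : Type*} [AddCommMonoid B] [Module A B]
    (F : List Ω → List Ω → B) (a : Ω) (x : List Ω →₀ A) :
    linearCombination A (deconcatSum F) (prepend a x) =
      linearCombination A (F []) (prepend a x) +
        linearCombination A (deconcatSum fun p => F (a :: p)) x := by
  simp only [linearCombination_prepend, deconcatSum_cons]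
  simp only [linearCombination_apply, smul_add, Finsupp.sum_add]

/-- The deconcatenation coproduct is multiplicative for the shuffle product. -/
lemma linearCombination_deconcatSum_shuffleWord {B : Type*} [AddCommMonoid B] [Module A B]
    (F : List Ω → List Ω → B) (α β : List Ω) :
    linearCombination A (deconcatSum F) (shuffleWord α β) =
      deconcatSum (fun α₁ α₂ => deconcatSum (fun β₁ β₂ =>
        linearCombination A (fun p => linearCombination A (F p) (shuffleWord α₂ β₂))
          (shuffleWord α₁ β₁)) β) α := by
  induction α, β using shuffleWord.induct generalizing F with
  | case1 β => simp [shuffleWord, deconcatSum_nil]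
  | case2 a α => simp [shuffleWord_nil_right, deconcatSum_nil]
  | case3 a α b β ih₁ ih₂ =>
    simp only [shuffleWord, map_add, linearCombination_deconcatSum_prepend, ih₁, ih₂]
    simp only [deconcatSum_cons, deconcatSum_add, shuffleWord, shuffleWord_nil_right, map_add,
      linearCombination_prepend, linearCombination_single, one_smul]
    abel

end Shuffle

section Character

variable {Ω A : Type*} [CommRing A]

/-- The augmentation of the shuffle algebra: the coefficient of the empty word, written as the
linear form defined by the unit mould. -/
noncomputable def counit : (List Ω →₀ A) →ₗ[A] A := linearCombination A munit

lemma counit_prepend (a : Ω) (x : List Ω →₀ A) : counit (prepend a x) = 0 := by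
  rw [counit, linearCombination_prepend]
  exact linearCombination_zero_apply A x

lemma shSum_eq_linearCombination (M : List Ω → A) (α β : List Ω) :
    shSum M α β = linearCombination A M (shuffleWord α β) := by
  rw [linearCombination_apply,
    Finsupp.sum_of_support_subset _ (s := (α ++ β).permutations.toFinset)]
  · simp only [shSum, shuffleWord_apply, nsmul_eq_mul, smul_eq_mul]
  · intro ω hω
    simpa using perm_append_of_shuffleWord_ne_zero (mem_support_iff.1 hω)
  · simp

/-- Alternal moulds are the infinitesimal characters of the shuffle algebra. -/
lemma isAlternal_iff (M : List Ω → A) :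
    IsAlternal M ↔ ∀ x y, linearCombination A M (shuffle x y) =
      counit x * linearCombination A M y + linearCombination A M x * counit y := by
  refine ⟨fun ⟨hnil, hM⟩ x y => ?_, fun h => ?_⟩
  · have hbilin : shuffle.compr₂ (linearCombination A M) =
        (LinearMap.mul A A).compl₁₂ counit (linearCombination A M) +
          (LinearMap.mul A A).compl₁₂ (linearCombination A M) counit := by
      ext α β
      rcases α with _ | ⟨a, α⟩
      · simp [counit, shuffleWord, hnil]
      rcases β with _ | ⟨b, β⟩
      · simp [counit, shuffleWord]
      simpa [counit, shSum_eq_linearCombination] using hM (a :: α) (b :: β) (by simp) (by simp)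
    exact LinearMap.congr_fun₂ hbilin x y
  · have hword (α β : List Ω) : shSum M α β = munit α * M β + M α * munit β := by
      simpa [shSum_eq_linearCombination, counit] using h (single α 1) (single β 1)
    refine ⟨by simpa [shSum_eq_linearCombination, shuffleWord] using hword [] [],
      fun α β hα hβ => ?_⟩
    rw [hword, munit_of_ne_nil hα, munit_of_ne_nil hβ, zero_mul, mul_zero, add_zero]

lemma linearCombination_shuffleWord_of_isAlternal {U : List Ω → A} (hU : IsAlternal U)
    (α β : List Ω) :
    linearCombination A U (shuffleWord α β) = munit α * U β + U α * munit β := by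
  simpa [counit] using (isAlternal_iff U).1 hU (single α 1) (single β 1)

/-- Symmetral moulds are the characters of the shuffle algebra. -/
lemma isSymmetral_iff (M : List Ω → A) :
    IsSymmetral M ↔ M [] = 1 ∧ ∀ x y, linearCombination A M (shuffle x y) =
      linearCombination A M x * linearCombination A M y := by
  refine ⟨fun ⟨hnil, hM⟩ => ⟨hnil, fun x y => ?_⟩, fun ⟨hnil, h⟩ => ⟨hnil, fun α β _ _ => ?_⟩⟩
  · have hbilin : shuffle.compr₂ (linearCombination A M) =
        (LinearMap.mul A A).compl₁₂ (linearCombination A M) (linearCombination A M) := by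
      ext α β
      rcases α with _ | ⟨a, α⟩
      · simp [shuffleWord, hnil]
      rcases β with _ | ⟨b, β⟩
      · simp [shuffleWord, hnil]
      simpa [shSum_eq_linearCombination] using hM (a :: α) (b :: β) (by simp) (by simp)
    exact LinearMap.congr_fun₂ hbilin x y
  · simpa [shSum_eq_linearCombination] using h (single α 1) (single β 1)

lemma isAlternal_idMould : IsAlternal (idMould : List Ω → A) := by
  refine ⟨rfl, fun α β hα hβ => Finset.sum_eq_zero fun ω hω => ?_⟩
  have hlen : ω.length = α.length + β.length := by
    simpa using (List.mem_permutations.1 (List.mem_toFinset.1 hω)).length_eq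
  have hαlen := List.length_pos_iff.2 hα
  have hβlen := List.length_pos_iff.2 hβ
  match ω with
  | [] => exact smul_zero _
  | [_] => rw [List.length_singleton] at hlen; omega
  | _ :: _ :: _ => exact smul_zero _

/-- An endomorphism of the shuffle algebra, as an algebra with unit the empty word, which is
compatible with the augmentation. -/
structure IsShuffleHom (f : (List Ω →₀ A) →ₗ[A] (List Ω →₀ A)) : Prop where
  map_nil : f (single [] 1) = single [] 1
  map_shuffle : ∀ x y, f (shuffle x y) = shuffle (f x) (f y)
  counit_map : ∀ x, counit (f x) = counit x

lemma IsShuffleHom.symm {e : (List Ω →₀ A) ≃ₗ[A] (List Ω →₀ A)}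
    (he : IsShuffleHom (e : (List Ω →₀ A) →ₗ[A] (List Ω →₀ A))) :
    IsShuffleHom (e.symm : (List Ω →₀ A) →ₗ[A] (List Ω →₀ A)) where
  map_nil := e.symm_apply_eq.2 he.map_nil.symm
  map_shuffle x y := e.symm_apply_eq.2 (by simpa using (he.map_shuffle (e.symm x) (e.symm y)).symm)
  counit_map x := by simpa using (he.counit_map (e.symm x)).symm

lemma linearCombination_pullback (M : List Ω → A) (f : (List Ω →₀ A) →ₗ[A] (List Ω →₀ A))
    (x : List Ω →₀ A) :
    linearCombination A (fun ω => linearCombination A M (f (single ω 1))) x =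
      linearCombination A M (f x) := by
  have hcomp : linearCombination A (fun ω => linearCombination A M (f (single ω 1))) =
      linearCombination A M ∘ₗ f := by
    ext ω
    simp
  rw [hcomp, LinearMap.comp_apply]

lemma isAlternal_comp {M : List Ω → A} (hM : IsAlternal M)
    {f : (List Ω →₀ A) →ₗ[A] (List Ω →₀ A)} (hf : IsShuffleHom f) :
    IsAlternal fun ω => linearCombination A M (f (single ω 1)) := by
  refine (isAlternal_iff _).2 fun x y => ?_
  simp only [linearCombination_pullback, hf.map_shuffle, (isAlternal_iff M).1 hM, hf.counit_map]

lemma isSymmetral_comp {M : List Ω → A} (hM : IsSymmetral M)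
    {f : (List Ω →₀ A) →ₗ[A] (List Ω →₀ A)} (hf : IsShuffleHom f) :
    IsSymmetral fun ω => linearCombination A M (f (single ω 1)) := by
  obtain ⟨hnil, hmul⟩ := (isSymmetral_iff M).1 hM
  refine (isSymmetral_iff _).2 ⟨by simp [hf.map_nil, hnil], fun x y => ?_⟩
  simp only [linearCombination_pullback, hf.map_shuffle, hmul]

end Character

section Composition

lemma sum_composition_length_cons {X B : Type*} [AddCommMonoid B] (a : X) (l : List X)
    (f : List ℕ → B) :
    ∑ c : Composition (a :: l).length, f c.blocks =
      ∑ i ∈ Finset.range (l.length + 1),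
        ∑ c : Composition (l.drop i).length, f ((i + 1) :: c.blocks) := by
  rw [Finset.sum_sigma']
  symm
  refine Finset.sum_bij (fun x hx => ⟨(x.1 + 1) :: x.2.blocks, ?_, ?_⟩) ?_ ?_ ?_ ?_
  · exact @fun k hk => (List.mem_cons.1 hk).elim (fun h => h ▸ x.1.succ_pos) x.2.blocks_pos
  · have := Finset.mem_range.1 (Finset.mem_sigma.1 hx).1
    rw [List.sum_cons, x.2.blocks_sum, List.length_drop, List.length_cons]
    omega
  · simp
  · rintro ⟨i, c⟩ _ ⟨j, d⟩ _ h
    simp only [Composition.mk.injEq, List.cons.injEq, Nat.add_right_cancel_iff] at h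
    obtain ⟨rfl, h⟩ := h
    rw [Composition.ext h]
  · rintro ⟨_ | ⟨k, ns⟩, hpos, hsum⟩ _
    · simp at hsum
    · have hk : 0 < k := hpos (by simp)
      rw [List.sum_cons, List.length_cons] at hsum
      refine ⟨⟨k - 1, ns, fun h => hpos (by simp [h]), by rw [List.length_drop]; omega⟩,
        by simp; omega, ?_⟩
      simp [Nat.sub_add_cancel hk]
  · intros
    rfl

lemma sum_splitWrtComposition_cons {X B : Type*} [AddCommMonoid B] (a : X) (l : List X)
    (f : List (List X) → B) :
    ∑ c : Composition (a :: l).length, f ((a :: l).splitWrtComposition c) =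
      deconcatSum
        (fun p q => ∑ c : Composition q.length, f ((a :: p) :: q.splitWrtComposition c)) l := by
  simp only [List.splitWrtComposition]
  rw [sum_composition_length_cons a l fun b => f ((a :: l).splitWrtCompositionAux b)]
  simp [List.splitWrtCompositionAux_cons, deconcatSum]

lemma splitWrtComposition_ones {X : Type*} (ω : List X) :
    ω.splitWrtComposition (Composition.ones ω.length) = ω.map fun a => [a] := by
  rw [List.splitWrtComposition, Composition.ones_blocks]
  induction ω with
  | nil => rfl
  | cons a l ih => simpa [List.replicate_succ, List.splitWrtCompositionAux_cons] using ih

end Composition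

section Weight

variable {Ω : Type*} [AddCommSemigroup Ω] [Nonempty Ω]

lemma coe_wsum {ω : List Ω} (hω : ω ≠ []) :
    ((wsum ω : Ω) : WithZero Ω) = (ω.map WithZero.coe).sum := by
  obtain ⟨a, l, rfl⟩ := List.exists_cons_of_ne_nil hω
  induction l generalizing a with
  | nil => simp [wsum]
  | cons b l ih => simpa [wsum, add_assoc] using ih (a + b) (by simp)

lemma wsum_perm {v w : List Ω} (h : v.Perm w) : wsum v = wsum w := by
  rcases eq_or_ne v [] with rfl | hv
  · rw [List.nil_perm.1 h]
  · have hw : w ≠ [] := fun hw => hv (hw ▸ h).eq_nil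
    rw [← WithZero.coe_inj, coe_wsum hv, coe_wsum hw, (h.map _).sum_eq]

lemma wsum_map_wsum {L : List (List Ω)} (hL : ∀ p ∈ L, p ≠ []) :
    wsum (L.map wsum) = wsum L.flatten := by
  rcases eq_or_ne L [] with rfl | hne
  · rfl
  have hflat : L.flatten ≠ [] := by
    obtain ⟨p, hp⟩ := List.exists_mem_of_ne_nil L hne
    exact mt (fun h => List.flatten_eq_nil_iff.1 h p hp) (hL p hp)
  rw [← WithZero.coe_inj, coe_wsum hflat, coe_wsum (by simpa using hne), List.map_flatten,
    List.sum_flatten, List.map_map, List.map_map]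
  exact congrArg List.sum (List.map_congr_left fun p hp => coe_wsum (hL p hp))

end Weight

section Substitution

variable {Ω A : Type*} [AddCommSemigroup Ω] [Nonempty Ω] [CommRing A]

/-- The image of a word under the substitution map of the mould `U`: the sum, over the
decompositions of `ω` into non-empty blocks, of the word `(‖ω¹‖, …, ‖ω^s‖)` with coefficient
`U^{ω¹} ⋯ U^{ω^s}`. -/
noncomputable def substWord (U : List Ω → A) (ω : List Ω) : List Ω →₀ A :=
  ∑ c : Composition ω.length,
    single ((ω.splitWrtComposition c).map wsum) ((ω.splitWrtComposition c).map U).prod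

/-- The endomorphism of the space of words dual to the mould composition `M ↦ M ∘ U`. -/
noncomputable def subst (U : List Ω → A) : (List Ω →₀ A) →ₗ[A] (List Ω →₀ A) :=
  linearCombination A (substWord U)

lemma subst_single_one (U : List Ω → A) (ω : List Ω) : subst U (single ω 1) = substWord U ω := by
  simp [subst]

lemma mcomp_apply (M U : List Ω → A) (ω : List Ω) :
    mcomp M U ω = linearCombination A M (substWord U ω) := by
  simp only [mcomp, substWord, map_sum, linearCombination_single, smul_eq_mul, mul_comm]

lemma linearCombination_mcomp (M U : List Ω → A) (x : List Ω →₀ A) :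
    linearCombination A (mcomp M U) x = linearCombination A M (subst U x) := by
  simp only [← linearCombination_pullback M (subst U), subst_single_one, ← mcomp_apply]

lemma substWord_nil (U : List Ω → A) : substWord U [] = single [] 1 := by
  have hsplit (c : Composition ([] : List Ω).length) :
      ([] : List Ω).splitWrtComposition c = [] := by
    rw [← List.length_eq_zero_iff, List.length_splitWrtComposition]
    exact Nat.le_zero.1 c.length_le
  simp [substWord, hsplit, composition_card]

lemma substWord_cons (U : List Ω → A) (a : Ω) (ω : List Ω) :
    substWord U (a :: ω) =
      deconcatSum (fun p q => prepend (wsum (a :: p)) (U (a :: p) • substWord U q)) ω := by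
  rw [substWord, sum_splitWrtComposition_cons a ω fun L => single (L.map wsum) (L.map U).prod]
  simp only [substWord, Finset.smul_sum, map_sum, smul_single, smul_eq_mul, prepend_single,
    List.map_cons, List.prod_cons]

lemma substWord_of_ne_nil {U : List Ω → A} (hU : U [] = 0) {ω : List Ω} (hω : ω ≠ []) :
    substWord U ω = deconcatSum (fun p q => prepend (wsum p) (U p • substWord U q)) ω := by
  obtain ⟨a, ω, rfl⟩ := List.exists_cons_of_ne_nil hω
  rw [substWord_cons, deconcatSum_cons, hU, zero_smul, map_zero, zero_add]

lemma exists_eq_map_wsum_of_substWord_ne_zero {U : List Ω → A} {ω w : List Ω}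
    (h : substWord U ω w ≠ 0) :
    ∃ c : Composition ω.length, (ω.splitWrtComposition c).map wsum = w := by
  rw [substWord, finsetSum_apply] at h
  obtain ⟨c, -, hc⟩ := Finset.exists_ne_zero_of_sum_ne_zero h
  exact ⟨c, by_contra fun hne => hc (single_eq_of_ne' hne)⟩

lemma ne_nil_of_substWord_ne_zero {U : List Ω → A} {ω w : List Ω} (hω : ω ≠ [])
    (h : substWord U ω w ≠ 0) : w ≠ [] := by
  obtain ⟨c, rfl⟩ := exists_eq_map_wsum_of_substWord_ne_zero h
  rw [ne_eq, List.map_eq_nil_iff]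
  intro hsplit
  rw [← ω.flatten_splitWrtComposition c, hsplit] at hω
  exact hω rfl

lemma wsum_eq_of_substWord_ne_zero {U : List Ω → A} {ω w : List Ω} (h : substWord U ω w ≠ 0) :
    wsum w = wsum ω := by
  obtain ⟨c, rfl⟩ := exists_eq_map_wsum_of_substWord_ne_zero h
  have hne (p : List Ω) (hp : p ∈ ω.splitWrtComposition c) : p ≠ [] :=
    List.length_pos_iff.1 (List.length_pos_of_mem_splitWrtComposition hp)
  rw [wsum_map_wsum hne, List.flatten_splitWrtComposition]

lemma map_wsum_map_singleton (ω : List Ω) : (ω.map fun a => [a]).map wsum = ω := by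
  simp [Function.comp_def, wsum]

lemma eq_ones_or_length_map_wsum_lt {ω : List Ω} (c : Composition ω.length) :
    c = Composition.ones ω.length ∨ ((ω.splitWrtComposition c).map wsum).length < ω.length := by
  rw [List.length_map, List.length_splitWrtComposition, Composition.eq_ones_iff_le_length]
  exact le_or_gt _ _

lemma substWord_apply_self (U : List Ω → A) (ω : List Ω) :
    substWord U ω ω = (ω.map fun a => U [a]).prod := by
  rw [substWord, finsetSum_apply, Finset.sum_eq_single (Composition.ones ω.length)]
  · rw [splitWrtComposition_ones, map_wsum_map_singleton, single_eq_same, List.map_map]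
    rfl
  · intro c _ hc
    refine single_eq_of_ne' fun h => ?_
    have hlt := (eq_ones_or_length_map_wsum_lt c).resolve_left hc
    rw [h] at hlt
    exact lt_irrefl _ hlt
  · simp

lemma bijective_subst {U : List Ω → A} (hU : ∀ a, IsUnit (U [a])) :
    Function.Bijective (subst U) := by
  have hdiag (ω : List Ω) : IsUnit (subst U (single ω 1) ω) := by
    rw [subst_single_one, substWord_apply_self]
    exact List.prod_isUnit (by simpa using fun a _ => hU a)
  have htri (ω w : List Ω) (h : subst U (single ω 1) w ≠ 0) : w = ω ∨ w.length < ω.length := by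
    rw [subst_single_one] at h
    obtain ⟨c, rfl⟩ := exists_eq_map_wsum_of_substWord_ne_zero h
    refine (eq_ones_or_length_map_wsum_lt c).imp_left ?_
    rintro rfl
    rw [splitWrtComposition_ones, map_wsum_map_singleton]
  exact ⟨injective_of_triangular hdiag htri, surjective_of_triangular hdiag htri⟩

lemma linearCombination_substWord_cons {B : Type*} [AddCommMonoid B] [Module A B]
    (U : List Ω → A) (f : List Ω → B) (a : Ω) (ω : List Ω) :
    linearCombination A f (substWord U (a :: ω)) = deconcatSum (fun p q => U (a :: p) •
      linearCombination A (fun w => f (wsum (a :: p) :: w)) (substWord U q)) ω := by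
  rw [substWord_cons, map_deconcatSum]
  simp only [map_smul, linearCombination_prepend]

lemma counit_subst (U : List Ω → A) (x : List Ω →₀ A) : counit (subst U x) = counit x := by
  have hcomp : counit ∘ₗ subst U = (counit : (List Ω →₀ A) →ₗ[A] A) := by
    ext ω
    cases ω with
    | nil => simp [subst_single_one, substWord_nil]
    | cons a ω =>
      have hcounit : counit (single (a :: ω) (1 : A)) = 0 := by simp [counit]
      simp [subst_single_one, substWord_cons, map_deconcatSum, counit_prepend, deconcatSum_zero,
        hcounit]
  exact LinearMap.congr_fun hcomp x

/-- The substitution map is a morphism for the deconcatenation coproduct. -/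
lemma linearCombination_deconcatSum_substWord {B : Type*} [AddCommMonoid B] [Module A B]
    (U : List Ω → A) (F : List Ω → List Ω → B) (ω : List Ω) :
    linearCombination A (deconcatSum F) (substWord U ω) =
      deconcatSum (fun p q => linearCombination A
        (fun x => linearCombination A (F x) (substWord U q)) (substWord U p)) ω := by
  induction ω using suffix_induction generalizing F with
  | step ω ih =>
    cases ω with
    | nil => simp [substWord_nil, deconcatSum_nil]
    | cons a ω =>
      have hleft : linearCombination A (deconcatSum F) (substWord U (a :: ω)) =
          linearCombination A (F []) (substWord U (a :: ω)) +
            deconcatSum (fun p t => U (a :: p) • linearCombination A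
              (deconcatSum fun r => F (wsum (a :: p) :: r)) (substWord U t)) ω := by
        simp only [substWord_cons, map_deconcatSum, linearCombination_deconcatSum_prepend,
          map_smul, smul_add, deconcatSum_add]
      have hright (p q : List Ω) : linearCombination A
            (fun x => linearCombination A (F x) (substWord U q)) (substWord U (a :: p)) =
          deconcatSum (fun r s => U (a :: r) • linearCombination A (fun x =>
            linearCombination A (F (wsum (a :: r) :: x)) (substWord U q)) (substWord U s)) p :=
        linearCombination_substWord_cons U _ a p
      rw [hleft, deconcatSum_cons, substWord_nil, linearCombination_single, one_smul]
      simp only [hright, deconcatSum_assoc]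
      refine congrArg _ (deconcatSum_congr fun p q hpq => ?_)
      rw [ih (a :: p) q (List.cons_ne_nil a p) (congrArg _ hpq), smul_deconcatSum]

lemma linearCombination_prepend_smul_substWord (U : List Ω → A) (a : Ω) (c : A)
    (x : List Ω →₀ A) :
    linearCombination A (fun w => prepend a (c • substWord U w)) x =
      prepend a (c • subst U x) := by
  have hcomp : linearCombination A (fun w => prepend a (c • substWord U w)) =
      prepend a ∘ₗ (c • subst U) := by
    refine lhom_ext' fun w => LinearMap.ext_ring ?_
    simp [subst_single_one]
  exact LinearMap.congr_fun hcomp x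

lemma linearCombination_prepend_wsum (V : List Ω → A) {s : Ω} {x : List Ω →₀ A}
    (hx : ∀ w, x w ≠ 0 → wsum w = s) (y : List Ω →₀ A) :
    linearCombination A (fun w => prepend (wsum w) (V w • y)) x =
      prepend s (linearCombination A V x • y) := by
  have hcomp : linearCombination A (fun w => prepend s (V w • y)) =
      prepend s ∘ₗ (linearCombination A V).smulRight y := by
    refine lhom_ext' fun w => LinearMap.ext_ring ?_
    simp
  exact (linearCombination_congr fun w hw => by rw [hx w hw]).trans (LinearMap.congr_fun hcomp x)

/-- Cutting off the first block: as `U` is alternal, it lies entirely in `α` or in `β`. -/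
lemma subst_shuffleWord_of_ne_nil {U : List Ω → A} (hU : IsAlternal U) {α : List Ω}
    (hα : α ≠ []) (β : List Ω) :
    subst U (shuffleWord α β) =
      deconcatSum (fun p q => prepend (wsum p) (U p • subst U (shuffleWord q β))) α +
        deconcatSum (fun p q => prepend (wsum p) (U p • subst U (shuffleWord α q))) β := by
  have hfirst : subst U (shuffleWord α β) = linearCombination A
      (deconcatSum fun p q => prepend (wsum p) (U p • substWord U q)) (shuffleWord α β) := by
    refine linearCombination_congr fun ω hω => ?_
    have hne : ω ≠ [] := by
      rintro rfl
      exact hα (List.append_eq_nil_iff.1 (perm_append_of_shuffleWord_ne_zero hω).nil_eq.symm).1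
    rw [substWord_of_ne_nil hU.1 hne]
  have hblocks (p q p' q' : List Ω) : linearCombination A (fun v => linearCombination A
        (fun w => prepend (wsum v) (U v • substWord U w)) (shuffleWord q q')) (shuffleWord p p') =
      (munit p : A) • prepend (wsum p') (U p' • subst U (shuffleWord q q')) +
        (munit p' : A) • prepend (wsum p) (U p • subst U (shuffleWord q q')) := by
    simp only [linearCombination_prepend_smul_substWord]
    rw [linearCombination_prepend_wsum U fun w hw =>
      wsum_perm (perm_append_of_shuffleWord_ne_zero hw),
      linearCombination_shuffleWord_of_isAlternal hU]
    cases p <;> cases p' <;> simp [hU.1]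
  rw [hfirst, linearCombination_deconcatSum_shuffleWord]
  simp only [hblocks, deconcatSum_add, ← smul_deconcatSum, deconcatSum_munit_smul]
  rw [add_comm]

lemma subst_shuffleWord {U : List Ω → A} (hU : IsAlternal U) (α β : List Ω) :
    subst U (shuffleWord α β) = shuffle (substWord U α) (substWord U β) := by
  induction α using suffix_induction generalizing β with
  | step α ihα =>
    induction β using suffix_induction with
    | step β ihβ =>
      rcases eq_or_ne α [] with rfl | hα
      · rw [shuffleWord, subst_single_one, substWord_nil, shuffle_single_nil_left]
      rcases eq_or_ne β [] with rfl | hβ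
      · rw [shuffleWord_nil_right, subst_single_one, substWord_nil, shuffle_single_nil_right]
      have hshuffle : shuffle (substWord U α) (substWord U β) =
          deconcatSum (fun p q =>
              prepend (wsum p) (U p • shuffle (substWord U q) (substWord U β))) α +
            deconcatSum (fun p q =>
              prepend (wsum p) (U p • shuffle (substWord U α) (substWord U q))) β := by
        have h := shuffle_deconcatSum_prepend wsum (fun p q => U p • substWord U q)
          (fun p q => U p • substWord U q) α β
        rw [← substWord_of_ne_nil hU.1 hα, ← substWord_of_ne_nil hU.1 hβ] at h
        simpa only [map_smul, LinearMap.smul_apply] using h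
      rw [subst_shuffleWord_of_ne_nil hU hα, hshuffle]
      refine congrArg₂ _ (deconcatSum_congr fun p q hpq => ?_) (deconcatSum_congr fun p q hpq => ?_)
      · rcases eq_or_ne p [] with rfl | hp
        · simp only [hU.1, zero_smul]
        · rw [ihα p q hp hpq]
      · rcases eq_or_ne p [] with rfl | hp
        · simp only [hU.1, zero_smul]
        · rw [ihβ p q hp hpq]

lemma isShuffleHom_subst {U : List Ω → A} (hU : IsAlternal U) : IsShuffleHom (subst U) where
  map_nil := by rw [subst_single_one, substWord_nil]
  map_shuffle x y := by
    have hbilin : shuffle.compr₂ (subst U) = shuffle.compl₁₂ (subst U) (subst U) := by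
      ext1 α
      ext1
      ext1 β
      ext1
      simp [subst_single_one, subst_shuffleWord hU]
    exact LinearMap.congr_fun₂ hbilin x y
  counit_map := counit_subst U

lemma mcomp_nil (M U : List Ω → A) : mcomp M U [] = M [] := by
  simp [mcomp_apply, substWord_nil]

/-- `V ↦ subst V` reverses composition because `subst U` respects the deconcatenation coproduct
and preserves weights. -/
lemma subst_substWord (U : List Ω → A) {V : List Ω → A} (hV : V [] = 0) (ω : List Ω) :
    subst V (substWord U ω) = substWord (mcomp V U) ω := by
  have hVU : mcomp V U [] = 0 := by rw [mcomp_nil, hV]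
  induction ω using suffix_induction with
  | step ω ih =>
    rcases eq_or_ne ω [] with rfl | hω
    · rw [substWord_nil, substWord_nil, subst_single_one, substWord_nil]
    have hfirst : subst V (substWord U ω) = linearCombination A
        (deconcatSum fun p q => prepend (wsum p) (V p • substWord V q)) (substWord U ω) :=
      linearCombination_congr fun w hw =>
        substWord_of_ne_nil hV (ne_nil_of_substWord_ne_zero hω hw)
    rw [hfirst, linearCombination_deconcatSum_substWord, substWord_of_ne_nil hVU hω]
    refine deconcatSum_congr fun p q hpq => ?_
    simp only [linearCombination_prepend_smul_substWord]
    rw [linearCombination_prepend_wsum V fun w hw => wsum_eq_of_substWord_ne_zero hw,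
      ← mcomp_apply]
    rcases eq_or_ne p [] with rfl | hp
    · rw [hVU, zero_smul, zero_smul]
    · rw [ih p q hp hpq]

lemma substWord_idMould (ω : List Ω) : substWord (idMould : List Ω → A) ω = single ω 1 := by
  induction ω with
  | nil => exact substWord_nil _
  | cons a ω ih =>
    simp only [substWord_of_ne_nil (U := idMould) rfl (List.cons_ne_nil a ω), map_smul,
      deconcatSum_idMould_smul_cons, ih, prepend_single]
    rfl

lemma idMould_mcomp {U : List Ω → A} (hU : U [] = 0) : mcomp idMould U = U := by
  funext ω
  cases ω with
  | nil => exact (mcomp_nil _ _).trans hU.symm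
  | cons a ω =>
    have hcounit (q : List Ω) : linearCombination A munit (substWord U q) = (munit q : A) := by
      simpa [counit, subst_single_one] using counit_subst U (single q 1)
    have hcons (b : Ω) : (fun w => (idMould (b :: w) : A)) = munit := by
      funext w
      cases w <;> rfl
    rw [mcomp_apply, linearCombination_substWord_cons]
    simp only [hcons, hcounit, smul_eq_mul]
    exact deconcatSum_mul_munit (fun p => U (a :: p)) ω

lemma isAlternal_mcomp {M U : List Ω → A} (hM : IsAlternal M) (hU : IsAlternal U) :
    IsAlternal (mcomp M U) := by
  simpa only [subst_single_one, ← mcomp_apply] using isAlternal_comp hM (isShuffleHom_subst hU)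

lemma isSymmetral_mcomp {M U : List Ω → A} (hM : IsSymmetral M) (hU : IsAlternal U) :
    IsSymmetral (mcomp M U) := by
  simpa only [subst_single_one, ← mcomp_apply] using isSymmetral_comp hM (isShuffleHom_subst hU)

/-- `V` is the pullback of the identity mould along the inverse of the substitution map of `U`. -/
lemma exists_isAlternal_mcomp_inverse {U : List Ω → A} (hU : IsAlternal U)
    (hunit : ∀ a, IsUnit (U [a])) :
    ∃ V : List Ω → A, mcomp U V = idMould ∧ mcomp V U = idMould ∧ IsAlternal V := by
  let e := LinearEquiv.ofBijective (subst U) (bijective_subst hunit)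
  have he (x : List Ω →₀ A) : e x = subst U x := rfl
  let V : List Ω → A := fun ω => linearCombination A idMould (e.symm (single ω 1))
  have hV : IsAlternal V := isAlternal_comp isAlternal_idMould
    (IsShuffleHom.symm (e := e) (isShuffleHom_subst hU))
  have hVU : mcomp V U = idMould := by
    funext ω
    have hpull := linearCombination_pullback idMould e.symm.toLinearMap (substWord U ω)
    rw [mcomp_apply]
    simpa [← subst_single_one, ← he] using hpull
  have hinv : subst V ∘ₗ subst U = LinearMap.id := by
    refine lhom_ext' fun ω => LinearMap.ext_ring ?_
    simp [subst_single_one, subst_substWord U hV.1, hVU, substWord_idMould]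
  have hsymm (ω : List Ω) : substWord V ω = e.symm (single ω 1) := by
    simpa [← he, subst_single_one] using LinearMap.congr_fun hinv (e.symm (single ω 1))
  refine ⟨V, funext fun ω => ?_, hVU, hV⟩
  have hU_pullback (x : List Ω →₀ A) :
      linearCombination A U x = linearCombination A idMould (e x) := by
    rw [he, ← linearCombination_mcomp, idMould_mcomp hU.1]
  rw [mcomp_apply, hsymm, hU_pullback, e.apply_symm_apply]
  simp

end Substitution

end Mould

theorem stmt_11_general {Ω A : Type*} [AddCommSemigroup Ω] [Nonempty Ω] [CommRing A]
    (U : List Ω → A) (hU : IsAlternal U) :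
    (∀ M : List Ω → A, IsAlternal M → IsAlternal (mcomp M U)) ∧
    (∀ M : List Ω → A, IsSymmetral M → IsSymmetral (mcomp M U)) ∧
    ((∀ w : Ω, IsUnit (U [w])) →
      ∃ V : List Ω → A, mcomp U V = idMould ∧ mcomp V U = idMould ∧ IsAlternal V) :=
  ⟨fun _ hM => Mould.isAlternal_mcomp hM hU, fun _ hM => Mould.isSymmetral_mcomp hM hU,
    Mould.exists_isAlternal_mcomp_inverse hU⟩

theorem stmt_11 {Ω A : Type*} [AddCommSemigroup Ω] [Nonempty Ω] [CommRing A] [Algebra ℂ A]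
    (U : List Ω → A) (hU : IsAlternal U) :
    (∀ M : List Ω → A, IsAlternal M → IsAlternal (mcomp M U)) ∧
    (∀ M : List Ω → A, IsSymmetral M → IsSymmetral (mcomp M U)) ∧
    ((∀ w : Ω, IsUnit (U [w])) →
      ∃ V : List Ω → A, mcomp U V = idMould ∧ mcomp V U = idMould ∧ IsAlternal V) :=
  stmt_11_general U hU
end

section
/- Let M be a symmetral mould and M^{×(−1)} its multiplicative inverse (which exists since M^∅ = 1). Let D be a mould derivation of one of the following three kinds: (i) D is induced by a ℂ-linear derivation d of A, (D M)^ω = d(M^ω); (ii) D = D_φ for a function φ : Ω → A, (D_φ M)^∅ = 0 and (D_φ M)^{ω₁,…,ω_r} = (φ(ω₁)+…+φ(ω_r)) M^{ω₁,…,ω_r}; (iii) Ω is a commutative semigroup and D = ∇_J with J an alternal mould, (∇_J M)^ω = Σ_{ω = α·β·γ, β ≠ ∅} J^β M^{α·(‖β‖)·γ}, where (‖β‖) is the one-letter word formed by the sum of the letters of β. Then (D M) × M^{×(−1)} and M^{×(−1)} × (D M) are alternal moulds. -/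
/-! Statement 12: for a symmetral mould M with multiplicative inverse N, and D a mould derivation of one of the three indicated kinds, (D M) × N and N × (D M) are alternal. -/

open scoped Classical

/-- The mould derivation `D_φ`: `(D_φ M)^{ω₁,…,ω_r} = (φ(ω₁)+…+φ(ω_r)) M^ω`. -/
def Dphi {Ω A : Type*} [CommRing A] (φ : Ω → A) (M : List Ω → A) : List Ω → A := fun ω =>
  (ω.map φ).sum * M ω

/-- The mould derivation `∇_J`:
`(∇_J M)^ω = Σ_{ω = α·β·γ, β ≠ ∅} J^β M^{α·(‖β‖)·γ}`. -/
noncomputable def nablaJ {Ω A : Type*} [AddCommSemigroup Ω] [Nonempty Ω] [CommRing A]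
    (J M : List Ω → A) : List Ω → A := fun ω =>
  ∑ i ∈ Finset.range (ω.length + 1), ∑ j ∈ Finset.Ico (i + 1) (ω.length + 1),
    J ((ω.drop i).take (j - i)) *
      M (ω.take i ++ wsum ((ω.drop i).take (j - i)) :: ω.drop j)

/-! In the algebra of dimoulds (functions of two words), the map `τ M := shSum M` is multiplicative:
cutting a shuffle of `α` and `β` in two amounts to cutting `α` and `β` and shuffling the pieces. In
terms of `τ`, a mould `M` is symmetral when `M^∅ = 1` and `τ M = M ⊗ M`, and it is alternal when
`τ M = M ⊗ 1 + 1 ⊗ M`. Hence the inverse `N` of a symmetral `M` satisfies `τ N = N ⊗ N`, and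
`τ D = D ⊗ M + M ⊗ D` implies `τ (D × N) = (D × N) ⊗ 1 + 1 ⊗ (D × N)`, and likewise for `N × D`.

It remains to check `τ (D M) = D M ⊗ M + M ⊗ D M` for the three derivations. Only `∇_J` takes work:
a contracted block `v` of a shuffle of `α` and `β` is itself a shuffle of a factor of `α` with a
factor of `β`, so that alternality of `J` leaves only the blocks contained in `α` or in `β`, and
contracting such a block commutes with shuffling. -/

section Mould

variable {Ω A : Type*}

section SplitSum

/-- The sum of `F u v` over the decompositions `w = u ++ v`. -/
def splitSum [AddCommMonoid A] (F : List Ω → List Ω → A) (w : List Ω) : A :=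
  ∑ i ∈ Finset.range (w.length + 1), F (w.take i) (w.drop i)

section AddCommMonoid

variable [AddCommMonoid A]

@[simp] lemma splitSum_nil (F : List Ω → List Ω → A) : splitSum F [] = F [] [] := by
  simp [splitSum]

lemma splitSum_cons (F : List Ω → List Ω → A) (c : Ω) (w : List Ω) :
    splitSum F (c :: w) = F [] (c :: w) + splitSum (fun u v => F (c :: u) v) w := by
  rw [splitSum, List.length_cons, Finset.sum_range_succ', add_comm]
  rfl

lemma splitSum_add (F G : List Ω → List Ω → A) (w : List Ω) :
    splitSum (fun u v => F u v + G u v) w = splitSum F w + splitSum G w :=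
  Finset.sum_add_distrib

lemma splitSum_apply {ι : Type*} (F : List Ω → List Ω → ι → A) (w : List Ω) (i : ι) :
    splitSum F w i = splitSum (fun u v => F u v i) w :=
  Finset.sum_apply ..

lemma splitSum_comm (F : List Ω → List Ω → List Ω → List Ω → A) (α β : List Ω) :
    splitSum (fun u v => splitSum (fun x y => F u v x y) β) α =
      splitSum (fun x y => splitSum (fun u v => F u v x y) α) β :=
  Finset.sum_comm

lemma splitSum_assoc (F : List Ω → List Ω → List Ω → A) (w : List Ω) :
    splitSum (fun u v => splitSum (fun x y => F x y v) u) w =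
      splitSum (fun u v => splitSum (fun x y => F u x y) v) w := by
  induction w generalizing F with
  | nil => simp only [splitSum_nil]
  | cons c w ih =>
    simp only [splitSum_cons, splitSum_nil, splitSum_add, ih fun x y v => F (c :: x) y v,
      add_assoc]

end AddCommMonoid

lemma splitSum_mul_left [NonUnitalNonAssocSemiring A] (a : A) (F : List Ω → List Ω → A)
    (w : List Ω) : splitSum (fun u v => a * F u v) w = a * splitSum F w :=
  (Finset.mul_sum ..).symm

end SplitSum

variable [CommRing A]

section MouldMultiplication

@[simp] lemma munit_nil : munit ([] : List Ω) = (1 : A) := rfl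

@[simp] lemma munit_cons (c : Ω) (w : List Ω) : (munit (c :: w) : A) = 0 := rfl

lemma splitSum_munit_smul {B : Type*} [AddCommMonoid B] [Module A B]
    (F : List Ω → List Ω → B) (w : List Ω) :
    splitSum (fun u v => (munit u : A) • F u v) w = F [] w := by
  cases w <;> simp [splitSum, Finset.sum_range_succ']

lemma splitSum_smul_munit {B : Type*} [AddCommMonoid B] [Module A B]
    (F : List Ω → List Ω → B) (w : List Ω) :
    splitSum (fun u v => (munit v : A) • F u v) w = F w [] := by
  induction w generalizing F with
  | nil => simp
  | cons c w ih => simp [splitSum_cons, ih fun u v => F (c :: u) v]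

lemma mmul_eq_splitSum (M N : List Ω → A) (w : List Ω) :
    mmul M N w = splitSum (fun u v => M u * N v) w := rfl

lemma add_mmul (M M' N : List Ω → A) : mmul (M + M') N = mmul M N + mmul M' N := by
  funext w
  simp only [mmul, Pi.add_apply, add_mul, Finset.sum_add_distrib]

lemma mmul_add (M N N' : List Ω → A) : mmul M (N + N') = mmul M N + mmul M N' := by
  funext w
  simp only [mmul, Pi.add_apply, mul_add, Finset.sum_add_distrib]

lemma smul_mmul_smul (a b : A) (M N : List Ω → A) :
    mmul (a • M) (b • N) = (a * b) • mmul M N := by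
  funext w
  simp only [mmul, Pi.smul_apply, smul_eq_mul, Finset.mul_sum, mul_mul_mul_comm]

lemma splitSum_mmul (F : List Ω → List Ω → List Ω → A) (N : List Ω → A) (w : List Ω) :
    mmul (splitSum F w) N = splitSum (fun u v => mmul (F u v) N) w := by
  funext β
  simp only [splitSum, mmul, Finset.sum_apply, Finset.sum_mul]
  exact Finset.sum_comm

lemma mmul_splitSum (M : List Ω → A) (F : List Ω → List Ω → List Ω → A) (w : List Ω) :
    mmul M (splitSum F w) = splitSum (fun u v => mmul M (F u v)) w := by
  funext β
  simp only [splitSum, mmul, Finset.sum_apply, Finset.mul_sum]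
  exact Finset.sum_comm

lemma mmul_assoc (L M N : List Ω → A) : mmul (mmul L M) N = mmul L (mmul M N) := by
  funext w
  have h := splitSum_assoc (fun x y z => L x * M y * N z) w
  simpa only [mmul, splitSum, Finset.sum_mul, Finset.mul_sum, mul_assoc] using h

lemma munit_mmul (M : List Ω → A) : mmul munit M = M := by
  funext w
  simpa only [mmul_eq_splitSum, smul_eq_mul] using
    splitSum_munit_smul (A := A) (fun _ v => M v) w

lemma mmul_munit (M : List Ω → A) : mmul M munit = M := by
  funext w
  simpa only [mmul_eq_splitSum, smul_eq_mul, mul_comm] using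
    splitSum_smul_munit (A := A) (fun u _ => M u) w

end MouldMultiplication

section Dimould

/-- The dimould `M ⊗ N`, a dimould being a function of two words. -/
def tensor (M N : List Ω → A) (α β : List Ω) : A := M α * N β

/-- The product of two dimoulds, in which both words are cut. A dimould is read as a mould with
values in the algebra of moulds. -/
noncomputable def dimul (P Q : List Ω → List Ω → A) : List Ω → List Ω → A :=
  splitSum fun α₁ α₂ => mmul (P α₁) (Q α₂)

lemma tensor_apply_eq_smul (M N : List Ω → A) (α : List Ω) : tensor M N α = M α • N := rfl

lemma dimul_assoc (P Q S : List Ω → List Ω → A) :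
    dimul (dimul P Q) S = dimul P (dimul Q S) := by
  funext α
  simp only [dimul, splitSum_mmul, mmul_splitSum, mmul_assoc]
  exact splitSum_assoc (fun x y z => mmul (P x) (mmul (Q y) (S z))) α

lemma add_dimul (P P' Q : List Ω → List Ω → A) :
    dimul (P + P') Q = dimul P Q + dimul P' Q := by
  funext α
  simp only [dimul, Pi.add_apply, add_mmul, splitSum_add]

lemma dimul_add (P Q Q' : List Ω → List Ω → A) :
    dimul P (Q + Q') = dimul P Q + dimul P Q' := by
  funext α
  simp only [dimul, Pi.add_apply, mmul_add, splitSum_add]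

lemma tensor_dimul_tensor (M M' N N' : List Ω → A) :
    dimul (tensor M M') (tensor N N') = tensor (mmul M N) (mmul M' N') := by
  funext α
  simp only [dimul, tensor_apply_eq_smul, smul_mmul_smul]
  exact (Finset.sum_smul ..).symm

lemma tensor_munit_dimul (P : List Ω → List Ω → A) : dimul (tensor munit munit) P = P := by
  funext α
  have h (u v : List Ω) : mmul (tensor munit munit u) (P v) = (munit u : A) • P v := by
    simpa [tensor_apply_eq_smul, munit_mmul] using smul_mmul_smul (munit u) 1 munit (P v)
  simp only [dimul, h, splitSum_munit_smul]

lemma dimul_tensor_munit (P : List Ω → List Ω → A) : dimul P (tensor munit munit) = P := by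
  funext α
  have h (u v : List Ω) : mmul (P u) (tensor munit munit v) = (munit v : A) • P u := by
    simpa [tensor_apply_eq_smul, mmul_munit] using smul_mmul_smul 1 (munit v) (P u) munit
  simp only [dimul, h, splitSum_smul_munit]

end Dimould

section ShuffleSum

lemma sh_nil_left (β w : List Ω) : sh [] β w = if β = w then 1 else 0 := by
  induction β generalizing w with
  | nil => cases w <;> simp [sh]
  | cons b β ih => cases w <;> simp [sh, ih, ite_and]

lemma sh_nil_right (α w : List Ω) : sh α [] w = if α = w then 1 else 0 := by
  induction α generalizing w with
  | nil => cases w <;> simp [sh]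
  | cons a α ih => cases w <;> simp [sh, ih, ite_and]

lemma sh_cons_cons (a b : Ω) (α β w : List Ω) :
    sh (a :: α) (b :: β) w =
      (if w.head? = some a then sh α (b :: β) w.tail else 0) +
        (if w.head? = some b then sh (a :: α) β w.tail else 0) := by
  cases w <;> simp [sh, eq_comm]

lemma sum_permutations_ite_head? {c : Ω} {γ δ : List Ω} (h : γ.Perm (c :: δ))
    (f : List Ω → A) :
    ∑ w ∈ γ.permutations.toFinset, (if w.head? = some c then f w else 0) =
      ∑ w ∈ δ.permutations.toFinset, f (c :: w) := by
  have h_filter : γ.permutations.toFinset.filter (fun w => w.head? = some c) =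
      δ.permutations.toFinset.image (c :: ·) := by
    ext w
    cases w with
    | nil => simp
    | cons b w =>
      suffices (b :: w).Perm γ ∧ b = c ↔ w.Perm δ ∧ c = b by simpa
      grind [h.congr_right, List.perm_cons]
  rw [← Finset.sum_filter, h_filter, Finset.sum_image List.cons_injective.injOn]

@[simp] lemma shSum_nil_left (M : List Ω → A) (β : List Ω) : shSum M [] β = M β := by
  simp [shSum, sh_nil_left]

@[simp] lemma shSum_nil_right (M : List Ω → A) (α : List Ω) : shSum M α [] = M α := by
  simp [shSum, sh_nil_right]

lemma shSum_cons_cons (M : List Ω → A) (a b : Ω) (α β : List Ω) :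
    shSum M (a :: α) (b :: β) =
      shSum (fun w => M (a :: w)) α (b :: β) + shSum (fun w => M (b :: w)) (a :: α) β := by
  simp only [shSum, sh_cons_cons, add_smul, ite_smul, zero_smul, Finset.sum_add_distrib]
  congr 1
  · exact sum_permutations_ite_head? (List.Perm.refl _) fun w => sh α (b :: β) w.tail • M w
  · exact sum_permutations_ite_head? List.perm_middle fun w => sh (a :: α) β w.tail • M w

lemma shSum_comm (M : List Ω → A) (α β : List Ω) : shSum M α β = shSum M β α := by
  induction α generalizing M β with
  | nil => simp
  | cons a α ihα =>
    induction β generalizing M with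
    | nil => simp
    | cons b β ihβ => rw [shSum_cons_cons, shSum_cons_cons, ihα, ihβ, add_comm]

lemma shSum_add (M N : List Ω → A) (α β : List Ω) :
    shSum (fun w => M w + N w) α β = shSum M α β + shSum N α β := by
  simp only [shSum, smul_add, Finset.sum_add_distrib]

lemma shSum_mul_left (a : A) (M : List Ω → A) (α β : List Ω) :
    shSum (fun w => a * M w) α β = a * shSum M α β := by
  simp only [shSum, Finset.mul_sum, mul_smul_comm]

lemma shSum_mul_right (a : A) (M : List Ω → A) (α β : List Ω) :
    shSum (fun w => M w * a) α β = shSum M α β * a := by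
  simp only [mul_comm _ a, shSum_mul_left]

lemma shSum_congr {M N : List Ω → A} {α β : List Ω}
    (h : ∀ w, w.Perm (α ++ β) → M w = N w) : shSum M α β = shSum N α β :=
  Finset.sum_congr rfl fun w hw => by rw [h w (by simpa using hw)]

lemma map_shSum {B F : Type*} [CommRing B] [FunLike F A B] [AddMonoidHomClass F A B] (f : F)
    (M : List Ω → A) (α β : List Ω) : f (shSum M α β) = shSum (fun w => f (M w)) α β := by
  simp only [shSum, map_sum, map_nsmul]

lemma shSum_splitSum_comm (G : List Ω → List Ω → List Ω → A) (α β w : List Ω) :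
    shSum (fun x => splitSum (fun u v => G u v x) w) α β =
      splitSum (fun u v => shSum (G u v) α β) w := by
  simp only [shSum, splitSum, Finset.smul_sum]
  exact Finset.sum_comm

lemma shSum_splitSum (F : List Ω → List Ω → A) (α β : List Ω) :
    shSum (splitSum F) α β =
      splitSum (fun α₁ α₂ => splitSum (fun β₁ β₂ =>
        shSum (fun u => shSum (F u) α₂ β₂) α₁ β₁) β) α := by
  induction α generalizing F β with
  | nil => simp
  | cons a α ihα =>
    induction β generalizing F with
    | nil => simp
    | cons b β ihβ =>
      simp only [shSum_cons_cons, splitSum_cons, shSum_add, ihα, ihβ, splitSum_add,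
        shSum_nil_left, shSum_nil_right]
      abel

-- The letter `c` cuts every shuffle of `α` and `β₁ ++ c :: β₂` in two.
lemma shSum_append_cons_right (M : List Ω → A) (α β₁ : List Ω) (c : Ω) (β₂ : List Ω) :
    shSum M α (β₁ ++ c :: β₂) =
      splitSum (fun α₁ α₂ =>
        shSum (fun u => shSum (fun t => M (u ++ c :: t)) α₂ β₂) α₁ β₁) α := by
  induction α generalizing M β₁ with
  | nil => simp
  | cons a α ihα =>
    induction β₁ generalizing M with
    | nil =>
      simpa [shSum_cons_cons, splitSum_cons, add_comm] using ihα (fun w => M (a :: w)) []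
    | cons b β₁ ihβ =>
      have h_left := ihα (fun w => M (a :: w)) (b :: β₁)
      simp only [List.cons_append, shSum_cons_cons, splitSum_cons, splitSum_add, shSum_nil_left,
        ihβ] at h_left ⊢
      rw [h_left]
      abel

lemma shSum_append_cons_left (M : List Ω → A) (α₁ : List Ω) (c : Ω) (α₂ β : List Ω) :
    shSum M (α₁ ++ c :: α₂) β =
      splitSum (fun β₁ β₂ =>
        shSum (fun u => shSum (fun t => M (u ++ c :: t)) α₂ β₂) α₁ β₁) β := by
  simp only [shSum_comm _ α₁, shSum_comm _ α₂, shSum_comm _ (α₁ ++ c :: α₂),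
    shSum_append_cons_right]

lemma shSum_munit : shSum (munit : List Ω → A) = tensor munit munit := by
  funext α β
  rcases α with _ | ⟨a, α⟩
  · simp [tensor]
  rcases β with _ | ⟨b, β⟩
  · simp [tensor]
  · rw [shSum_cons_cons]
    simp [shSum, tensor]

lemma shSum_mmul (M N : List Ω → A) : shSum (mmul M N) = dimul (shSum M) (shSum N) := by
  funext α β
  simp only [funext (mmul_eq_splitSum M N), shSum_splitSum, dimul, splitSum_apply,
    mmul_eq_splitSum, shSum_mul_left, shSum_mul_right]

end ShuffleSum

section LogarithmicDerivative

lemma isAlternal_iff {M : List Ω → A} :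
    IsAlternal M ↔ shSum M = tensor M munit + tensor munit M := by
  constructor
  · rintro ⟨h_nil, h⟩
    funext α β
    rcases α with _ | ⟨a, α⟩
    · simp [tensor, h_nil]
    rcases β with _ | ⟨b, β⟩
    · simp [tensor, h_nil]
    · simpa [tensor] using h (a :: α) (b :: β) (by simp) (by simp)
  · intro h
    refine ⟨by simpa [tensor] using congrFun₂ h [] [], fun α β hα hβ => ?_⟩
    obtain ⟨a, α, rfl⟩ := List.exists_cons_of_ne_nil hα
    obtain ⟨b, β, rfl⟩ := List.exists_cons_of_ne_nil hβ
    simp [h, tensor]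

namespace IsSymmetral

variable {M N : List Ω → A}

lemma shSum_eq_tensor (hM : IsSymmetral M) : shSum M = tensor M M := by
  funext α β
  rcases α with _ | ⟨a, α⟩
  · simp [tensor, hM.1]
  rcases β with _ | ⟨b, β⟩
  · simp [tensor, hM.1]
  · exact hM.2 _ _ (by simp) (by simp)

lemma shSum_inverse_eq_tensor (hM : IsSymmetral M) (hMN : mmul M N = munit)
    (hNM : mmul N M = munit) : shSum N = tensor N N :=
  calc shSum N
    _ = dimul (shSum N) (dimul (tensor M M) (tensor N N)) := by
        rw [tensor_dimul_tensor, hMN, dimul_tensor_munit]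
    _ = dimul (shSum (mmul N M)) (tensor N N) := by
        rw [← dimul_assoc, shSum_mmul, hM.shSum_eq_tensor]
    _ = tensor N N := by
        rw [hNM, shSum_munit, tensor_munit_dimul]

theorem isAlternal_mmul_inverse {D : List Ω → A} (hM : IsSymmetral M) (hMN : mmul M N = munit)
    (hNM : mmul N M = munit) (hD : shSum D = tensor D M + tensor M D) :
    IsAlternal (mmul D N) ∧ IsAlternal (mmul N D) := by
  have hN : shSum N = tensor N N := hM.shSum_inverse_eq_tensor hMN hNM
  simp only [isAlternal_iff, shSum_mmul, hD, hN, add_dimul, dimul_add, tensor_dimul_tensor, hMN,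
    hNM, and_self]

lemma shSum_derivation {R : Type*} [CommSemiring R] [Algebra R A] (hM : IsSymmetral M)
    (d : Derivation R A A) :
    shSum (fun w => d (M w)) = tensor (fun w => d (M w)) M + tensor M (fun w => d (M w)) := by
  funext α β
  rw [← map_shSum, hM.shSum_eq_tensor]
  simp only [tensor, Pi.add_apply, Derivation.leibniz, smul_eq_mul]
  ring

lemma shSum_Dphi (hM : IsSymmetral M) (φ : Ω → A) :
    shSum (Dphi φ M) = tensor (Dphi φ M) M + tensor M (Dphi φ M) := by
  funext α β
  calc shSum (Dphi φ M) α β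
    _ = shSum (fun w => ((α ++ β).map φ).sum * M w) α β :=
        shSum_congr fun w hw => by rw [Dphi, (hw.map φ).sum_eq]
    _ = ((α.map φ).sum + (β.map φ).sum) * (M α * M β) := by
        rw [shSum_mul_left, hM.shSum_eq_tensor, tensor, List.map_append, List.sum_append]
    _ = (tensor (Dphi φ M) M + tensor M (Dphi φ M)) α β := by
        simp only [tensor, Dphi, Pi.add_apply]
        ring

end IsSymmetral

end LogarithmicDerivative

section Nabla

lemma IsAlternal.shSum_splitSum_mul {J : List Ω → A} (hJ : IsAlternal J)
    {G : List Ω → List Ω → A} (hG : ∀ {u v : List Ω}, u.Perm v → G u = G v) (α β : List Ω) :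
    shSum (splitSum fun v t => J v * G v t) α β =
      splitSum (fun v t => J v * shSum (G v) t β) α +
        splitSum (fun v t => J v * shSum (G v) α t) β := by
  have h_block (α₁ α₂ β₁ β₂ : List Ω) :
      shSum (fun v => J v * shSum (G v) α₂ β₂) α₁ β₁ =
        (munit β₁ : A) • (J α₁ * shSum (G (α₁ ++ β₁)) α₂ β₂) +
          (munit α₁ : A) • (J β₁ * shSum (G (α₁ ++ β₁)) α₂ β₂) := by
    rw [shSum_congr (N := fun v => J v * shSum (G (α₁ ++ β₁)) α₂ β₂)
        fun v hv => by rw [hG hv],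
      shSum_mul_right, isAlternal_iff.1 hJ]
    simp only [tensor, Pi.add_apply, smul_eq_mul]
    ring
  simp only [shSum_splitSum, shSum_mul_left, h_block, splitSum_add, splitSum_munit_smul,
    List.append_nil]
  rw [splitSum_comm _ α β]
  simp only [splitSum_munit_smul, List.nil_append]

variable [AddCommSemigroup Ω] [Nonempty Ω]

lemma wsum_eq_of_perm {u v : List Ω} (h : u.Perm v) : wsum u = wsum v := by
  induction h with
  | nil => rfl
  | cons a h _ =>
    have : RightCommutative (fun x y : Ω => x + y) := ⟨add_right_comm⟩
    exact h.foldl_eq a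
  | swap a b l => simp only [wsum, List.foldl_cons, add_comm]
  | trans _ _ ih₁ ih₂ => exact ih₁.trans ih₂

lemma nablaJ_eq_splitSum {J : List Ω → A} (hJ : J [] = 0) (M : List Ω → A) :
    nablaJ J M =
      splitSum fun u s => splitSum (fun v t => J v * M (u ++ wsum v :: t)) s := by
  funext w
  refine Finset.sum_congr rfl fun i _ => ?_
  simp only [splitSum]
  rw [Finset.sum_range_succ', Finset.sum_Ico_eq_sum_range]
  simp [hJ, List.drop_drop, add_assoc, add_comm 1]

lemma nablaJ_mul_left (J M : List Ω → A) (a : A) (w : List Ω) :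
    nablaJ J (fun u => a * M u) w = a * nablaJ J M w := by
  simp only [nablaJ, mul_left_comm _ a, Finset.mul_sum]

lemma IsAlternal.shSum_nablaJ {J : List Ω → A} (hJ : IsAlternal J) (M : List Ω → A)
    (α β : List Ω) :
    shSum (nablaJ J M) α β =
      nablaJ J (fun w => shSum M w β) α + nablaJ J (fun w => shSum M α w) β := by
  have h_tail (u α₂ β₂ : List Ω) :=
    hJ.shSum_splitSum_mul (G := fun v t => M (u ++ wsum v :: t))
      (fun h => by simp only [wsum_eq_of_perm h]) α₂ β₂
  have h_left : nablaJ J (fun w => shSum M w β) α =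
      splitSum (fun α₁ α₂ => splitSum (fun β₁ β₂ => shSum (fun u => splitSum (fun v t =>
        J v * shSum (fun s => M (u ++ wsum v :: s)) t β₂) α₂) α₁ β₁) β) α := by
    simp only [nablaJ_eq_splitSum hJ.1, shSum_append_cons_left, shSum_splitSum_comm,
      shSum_mul_left, ← splitSum_mul_left]
    exact congrArg (splitSum · α) (funext₂ fun _ _ => splitSum_comm ..)
  have h_right : nablaJ J (fun w => shSum M α w) β =
      splitSum (fun α₁ α₂ => splitSum (fun β₁ β₂ => shSum (fun u => splitSum (fun v t =>
        J v * shSum (fun s => M (u ++ wsum v :: s)) α₂ t) β₂) α₁ β₁) β) α := by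
    simp only [nablaJ_eq_splitSum hJ.1, shSum_append_cons_right, shSum_splitSum_comm,
      shSum_mul_left, ← splitSum_mul_left]
    rw [splitSum_comm _ α β]
    exact congrArg (splitSum · β) (funext₂ fun _ _ => splitSum_comm ..)
  simp only [h_left, h_right, nablaJ_eq_splitSum hJ.1, shSum_splitSum, h_tail, shSum_add,
    splitSum_add]

lemma IsSymmetral.shSum_nablaJ {J M : List Ω → A} (hM : IsSymmetral M) (hJ : IsAlternal J) :
    shSum (nablaJ J M) = tensor (nablaJ J M) M + tensor M (nablaJ J M) := by
  funext α β
  simp only [hJ.shSum_nablaJ, hM.shSum_eq_tensor, tensor, Pi.add_apply, mul_comm _ (M β),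
    nablaJ_mul_left]

end Nabla

end Mould

theorem stmt_12_general {R Ω A : Type*} [AddCommSemigroup Ω] [Nonempty Ω] [CommSemiring R]
    [CommRing A] [Algebra R A]
    (M N : List Ω → A) (hM : IsSymmetral M)
    (hMN : mmul M N = munit) (hNM : mmul N M = munit) :
    (∀ d : Derivation R A A,
      IsAlternal (mmul (fun ω => d (M ω)) N) ∧ IsAlternal (mmul N (fun ω => d (M ω)))) ∧
    (∀ φ : Ω → A,
      IsAlternal (mmul (Dphi φ M) N) ∧ IsAlternal (mmul N (Dphi φ M))) ∧
    (∀ J : List Ω → A, IsAlternal J →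
      IsAlternal (mmul (nablaJ J M) N) ∧ IsAlternal (mmul N (nablaJ J M))) :=
  ⟨fun d => hM.isAlternal_mmul_inverse hMN hNM (hM.shSum_derivation d),
    fun φ => hM.isAlternal_mmul_inverse hMN hNM (hM.shSum_Dphi φ),
    fun _ hJ => hM.isAlternal_mmul_inverse hMN hNM (hM.shSum_nablaJ hJ)⟩

theorem stmt_12 {Ω A : Type*} [AddCommSemigroup Ω] [Nonempty Ω] [CommRing A] [Algebra ℂ A]
    (M N : List Ω → A) (hM : IsSymmetral M)
    (hMN : mmul M N = munit) (hNM : mmul N M = munit) :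
    -- (i) D induced by a ℂ-linear derivation d of A
    (∀ d : Derivation ℂ A A,
      IsAlternal (mmul (fun ω => d (M ω)) N) ∧ IsAlternal (mmul N (fun ω => d (M ω)))) ∧
    -- (ii) D = D_φ for a function φ : Ω → A
    (∀ φ : Ω → A,
      IsAlternal (mmul (Dphi φ M) N) ∧ IsAlternal (mmul N (Dphi φ M))) ∧
    -- (iii) D = ∇_J with J an alternal mould
    (∀ J : List Ω → A, IsAlternal J →
      IsAlternal (mmul (nablaJ J M) N) ∧ IsAlternal (mmul N (nablaJ J M))) :=
  stmt_12_general M N hM hMN hNM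
end

section
/- Let ξ be the A-linear map from dimoulds to moulds defined by ξ(𝐌)^ω = Σ_{ω = α·β} (−1)^{r(α)} 𝐌^{(α̃,β)}, where α̃ denotes the reversal of the word α. Then for any two moulds M, N one has ξ(M ⊗ N) = (S M) × N, and ξ(τ(M)) = M^∅ · 1^•. -/
/-! Statement 14: the map ξ from dimoulds to moulds satisfies ξ(M ⊗ N) = (S M) × N and ξ(τ(M)) = M^∅ · 1^•. -/

open scoped Classical

/-- `(S M)^{ω₁,…,ω_r} = (−1)^r M^{ω_r,…,ω₁}`. -/
def Smap {Ω A : Type*} [CommRing A] (M : List Ω → A) : List Ω → A := fun ω =>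
  (-1 : A) ^ ω.length * M ω.reverse

/-- The map `ξ`, `ξ(MM)^ω = Σ_{ω = α·β} (−1)^{r(α)} MM^{(α̃,β)}` with `α̃` the reversal of `α`. -/
noncomputable def xi {Ω A : Type*} [CommRing A] (MM : List Ω → List Ω → A) : List Ω → A :=
  fun ω => ∑ i ∈ Finset.range (ω.length + 1),
    (-1 : A) ^ i * MM ((ω.take i).reverse) (ω.drop i)

/-!
In the alternating sum `ξ(τ(M))^ω` over the splittings `ω = α · b · β`, a shuffle of `b · α̃` with
`β` that starts with `b` is equally a shuffle of `α̃` with `b · β` that starts with `b`. The two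
occurrences come from splittings whose prefixes differ by one letter, so they carry opposite signs
and cancel.
-/

section

variable {Ω A : Type*} [CommRing A]

theorem sh_cons (α β : List Ω) (c : Ω) (w : List Ω) :
    sh α β (c :: w) =
      (if α.head? = some c then sh α.tail β w else 0) +
      (if β.head? = some c then sh α β.tail w else 0) := by
  cases α <;> cases β <;> simp [sh]

theorem shSum_eq_sum_of_perm (M : List Ω → A) {α β ω : List Ω} (h : (α ++ β).Perm ω) :
    shSum M α β = ∑ w ∈ ω.permutations.toFinset, (sh α β w : A) * M w := by
  have hperms : (α ++ β).permutations.toFinset = ω.permutations.toFinset :=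
    List.toFinset_eq_of_perm _ _ h.permutations
  simp only [shSum, hperms, nsmul_eq_mul]

theorem xi_nil (D : List Ω → List Ω → A) : xi D [] = D [] [] := by
  simp [xi]

theorem xi_cons (D : List Ω → List Ω → A) (b : Ω) (β : List Ω) :
    xi D (b :: β) = D [] (b :: β) - xi (fun γ δ => D (γ ++ [b]) δ) β := by
  simp [xi, Finset.sum_range_succ' _ (β.length + 1), pow_succ, sub_eq_neg_add]

theorem xi_mul_eq_mmul_Smap (M N : List Ω → A) :
    xi (fun α β => M α * N β) = mmul (Smap M) N := by
  funext ω
  refine Finset.sum_congr rfl fun i hi => ?_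
  have hlen : (ω.take i).length = i := List.length_take_of_le (Finset.mem_range_succ_iff.mp hi)
  simp only [Smap, hlen, mul_assoc]

/-- Appending `α` to every left argument makes the induction on `β` go through: `xi_cons` moves
the first letter of `β` to the front of `α`. -/
theorem xi_sh_append_cons (α β : List Ω) (c : Ω) (w : List Ω) :
    xi (fun γ δ => (sh (γ ++ α) δ (c :: w) : A)) β =
      if α.head? = some c then (sh α.tail β w : A) else 0 := by
  induction β generalizing α with
  | nil => simp [xi_nil, sh_cons]
  | cons b β ih =>
    have hrest : xi (fun γ δ => (sh (γ ++ [b] ++ α) δ (c :: w) : A)) β =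
        if b = c then (sh α β w : A) else 0 := by
      simpa using ih (b :: α)
    have hfirst : sh α (b :: β) (c :: w) =
        (if α.head? = some c then sh α.tail (b :: β) w else 0) +
        (if b = c then sh α β w else 0) := by
      simp [sh_cons]
    rw [xi_cons, hrest, List.nil_append, hfirst]
    push_cast
    exact add_sub_cancel_right _ _

theorem xi_sh_cons (β : List Ω) (c : Ω) (w : List Ω) :
    xi (fun γ δ => (sh γ δ (c :: w) : A)) β = 0 := by
  simpa using xi_sh_append_cons (A := A) [] β c w

theorem xi_tau_eq_sum (M : List Ω → A) (ω : List Ω) :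
    xi (tau M) ω =
      ∑ w ∈ ω.permutations.toFinset, xi (fun γ δ => (sh γ δ w : A)) ω * M w := by
  have hperm (i : ℕ) : ((ω.take i).reverse ++ ω.drop i).Perm ω := by
    simpa using (List.reverse_perm (ω.take i)).append_right (ω.drop i)
  simp only [xi, tau, fun i => shSum_eq_sum_of_perm M (hperm i), Finset.mul_sum, Finset.sum_mul,
    mul_assoc]
  exact Finset.sum_comm

theorem xi_tau (M : List Ω → A) : xi (tau M) = fun ω => M [] * munit ω := by
  funext ω
  cases ω with
  | nil => simp [xi_nil, tau, shSum, sh, munit]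
  | cons a ω =>
    suffices xi (tau M) (a :: ω) = 0 by simpa [munit] using this
    rw [xi_tau_eq_sum]
    refine Finset.sum_eq_zero fun w hw => ?_
    have hperm : w.Perm (a :: ω) := List.mem_permutations.mp (List.mem_toFinset.mp hw)
    cases w with
    | nil => simp at hperm
    | cons c w => rw [xi_sh_cons, zero_mul]

theorem stmt_14_general :
    (∀ M N : List Ω → A, xi (fun α β => M α * N β) = mmul (Smap M) N) ∧
    (∀ M : List Ω → A, xi (tau M) = fun ω => M [] * munit ω) :=
  ⟨xi_mul_eq_mmul_Smap, xi_tau⟩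

end

theorem stmt_14 {Ω A : Type*} [Nonempty Ω] [CommRing A] [Algebra ℂ A] :
    (∀ M N : List Ω → A, xi (fun α β => M α * N β) = mmul (Smap M) N) ∧
    (∀ M : List Ω → A, xi (tau M) = fun ω => M [] * munit ω) :=
  stmt_14_general
end
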